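/- arXiv:1902.02555 — 3 statements merged into one kernel-verified Lean document; each statement's English description precedes it below -/
import Mathlib

section
/- Let m ≥ 2k-1. Then every polynomial P ∈ 𝒫 has a unique representation P = Σ_n r^{2n} H_n, where the sum is over all families n = (n_ij)_{1 ≤ i ≤ j ≤ k} of nonnegative integers, only finitely many H_n are nonzero, and every H_n is a spherical harmonic. Equivalently, 𝒫 = ⊕_n r^{2n} ℋ (Theorem A, the harmonic Fischer decomposition in the semistable range). -/
open MvPolynomial

/-- The mixed Laplacian `Δ_ij = Σ_s ∂_{x^i_s} ∂_{x^j_s}` on polynomials in `k` vector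
variables of `ℝ^m`. -/
noncomputable def mixedLap (k m : ℕ) (i j : Fin k)
    (P : MvPolynomial (Fin k × Fin m) ℂ) : MvPolynomial (Fin k × Fin m) ℂ :=
  ∑ s : Fin m, pderiv (i, s) (pderiv (j, s) P)

/-- The polynomial `r²_ij = Σ_s x^i_s x^j_s`. -/
noncomputable def r2 (k m : ℕ) (i j : Fin k) : MvPolynomial (Fin k × Fin m) ℂ :=
  ∑ s : Fin m, X (i, s) * X (j, s)

/-- `H` is a spherical harmonic if `Δ_ij H = 0` for all `i ≤ j`. -/
def IsSphericalHarmonic (k m : ℕ) (H : MvPolynomial (Fin k × Fin m) ℂ) : Prop :=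
  ∀ i j : Fin k, i ≤ j → mixedLap k m i j H = 0

/-- For a family `n = (n_ij)_{i ≤ j}` of nonnegative integers, the polynomial
`r^{2n} = ∏_{i ≤ j} (r²_ij)^{n_ij}`. -/
noncomputable def r2pow (k m : ℕ) (n : {p : Fin k × Fin k // p.1 ≤ p.2} → ℕ) :
    MvPolynomial (Fin k × Fin m) ℂ :=
  ∏ p : {p : Fin k × Fin k // p.1 ≤ p.2}, (r2 k m p.1.1 p.1.2) ^ (n p)


namespace FischerDec

set_option linter.unusedSectionVars false
set_option linter.unusedSimpArgs false
set_option linter.style.haveILetI false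

section Fischer
variable {σ : Type*} [Fintype σ] [DecidableEq σ]

/-- Multi-factorial. -/
def mfact (a : σ →₀ ℕ) : ℕ := ∏ x, (a x).factorial

lemma mfact_pos (a : σ →₀ ℕ) : 0 < mfact a :=
  Finset.prod_pos fun _ _ => Nat.factorial_pos _

lemma mfact_add_single (a : σ →₀ ℕ) (s : σ) :
    mfact (a + Finsupp.single s 1) = mfact a * (a s + 1) := by
  unfold mfact
  rw [← Finset.mul_prod_erase _ _ (Finset.mem_univ s), ← Finset.mul_prod_erase _ (fun x => (a x).factorial) (Finset.mem_univ s)]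
  have : ∏ x ∈ Finset.univ.erase s, ((a + Finsupp.single s 1 : σ →₀ ℕ) x).factorial
      = ∏ x ∈ Finset.univ.erase s, (a x).factorial := by
    refine Finset.prod_congr rfl fun x hx => ?_
    have : s ≠ x := (Finset.ne_of_mem_erase hx).symm
    simp [Finsupp.single_apply, this]
  rw [this]
  simp [Nat.factorial_succ]
  ring

/-- The Fischer inner product. -/
noncomputable def fis (P Q : MvPolynomial σ ℂ) : ℂ :=
  ∑ a ∈ P.support, (mfact a : ℂ) * (starRingEnd ℂ (coeff a P) * coeff a Q)

lemma fis_eq_left (P Q : MvPolynomial σ ℂ) (s : Finset (σ →₀ ℕ)) (h : P.support ⊆ s) :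
    fis P Q = ∑ a ∈ s, (mfact a : ℂ) * (starRingEnd ℂ (coeff a P) * coeff a Q) := by
  refine Finset.sum_subset h fun a _ ha => ?_
  rw [notMem_support_iff] at ha
  simp [ha]

lemma fis_conj (P Q : MvPolynomial σ ℂ) : starRingEnd ℂ (fis Q P) = fis P Q := by
  rw [fis_eq_left P Q (P.support ∪ Q.support) Finset.subset_union_left,
    fis_eq_left Q P (P.support ∪ Q.support) Finset.subset_union_right, map_sum]
  refine Finset.sum_congr rfl fun a _ => ?_
  simp [mul_comm]

lemma fis_add_left (P P' Q : MvPolynomial σ ℂ) : fis (P + P') Q = fis P Q + fis P' Q := by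
  rw [fis_eq_left (P + P') Q (P.support ∪ P'.support) support_add,
    fis_eq_left P Q (P.support ∪ P'.support) Finset.subset_union_left,
    fis_eq_left P' Q (P.support ∪ P'.support) Finset.subset_union_right,
    ← Finset.sum_add_distrib]
  refine Finset.sum_congr rfl fun a _ => ?_
  simp; ring

lemma fis_add_right (P Q Q' : MvPolynomial σ ℂ) : fis P (Q + Q') = fis P Q + fis P Q' := by
  rw [← fis_conj, fis_add_left, map_add, fis_conj, fis_conj]

lemma fis_smul_left (c : ℂ) (P Q : MvPolynomial σ ℂ) :
    fis (c • P) Q = starRingEnd ℂ c * fis P Q := by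
  rw [fis_eq_left (c • P) Q P.support support_smul, fis, Finset.mul_sum]
  refine Finset.sum_congr rfl fun a _ => ?_
  simp; ring

lemma fis_zero_right (P : MvPolynomial σ ℂ) : fis P 0 = 0 := by simp [fis]
lemma fis_zero_left (P : MvPolynomial σ ℂ) : fis 0 P = 0 := by simp [fis]

lemma fis_sum_left {ι : Type*} (s : Finset ι) (f : ι → MvPolynomial σ ℂ) (Q : MvPolynomial σ ℂ) :
    fis (∑ i ∈ s, f i) Q = ∑ i ∈ s, fis (f i) Q := by
  classical
  induction s using Finset.induction_on with
  | empty => simp [fis_zero_left]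
  | insert a s ha ih => rw [Finset.sum_insert ha, Finset.sum_insert ha, fis_add_left, ih]

lemma fis_sum_right {ι : Type*} (s : Finset ι) (f : ι → MvPolynomial σ ℂ) (Q : MvPolynomial σ ℂ) :
    fis Q (∑ i ∈ s, f i) = ∑ i ∈ s, fis Q (f i) := by
  classical
  induction s using Finset.induction_on with
  | empty => simp [fis_zero_right]
  | insert a s ha ih => rw [Finset.sum_insert ha, Finset.sum_insert ha, fis_add_right, ih]

lemma fis_self (P : MvPolynomial σ ℂ) :
    fis P P = ((∑ a ∈ P.support, (mfact a : ℝ) * Complex.normSq (coeff a P) : ℝ) : ℂ) := by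
  rw [fis]
  push_cast
  refine Finset.sum_congr rfl fun a _ => ?_
  rw [Complex.normSq_eq_conj_mul_self]

lemma fis_self_eq_zero (P : MvPolynomial σ ℂ) (h : fis P P = 0) : P = 0 := by
  rw [fis_self, Complex.ofReal_eq_zero, Finset.sum_eq_zero_iff_of_nonneg] at h
  · ext a
    by_cases ha : a ∈ P.support
    · have := h a ha
      have hp := mfact_pos a
      have : Complex.normSq (coeff a P) = 0 := by
        rcases mul_eq_zero.1 this with h | h
        · exact absurd (by exact_mod_cast h) hp.ne'
        · exact h
      simpa using this
    · simpa using ha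
  · intro a _
    exact mul_nonneg (Nat.cast_nonneg _) (Complex.normSq_nonneg _)

lemma fis_monomial (a b : σ →₀ ℕ) (c d : ℂ) :
    fis (monomial a c) (monomial b d) =
      if a = b then (mfact a : ℂ) * (starRingEnd ℂ c * d) else 0 := by
  rw [fis_eq_left _ _ {a} support_monomial_subset]
  simp only [Finset.sum_singleton, coeff_monomial, if_true]
  by_cases h : a = b
  · simp [h]
  · simp [h, Ne.symm h]

lemma fis_X_mul (s : σ) (P Q : MvPolynomial σ ℂ) : fis (X s * P) Q = fis P (pderiv s Q) := by
  induction P using MvPolynomial.induction_on' with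
  | add p q hp hq => rw [mul_add, fis_add_left, hp, hq, fis_add_left]
  | monomial a c =>
    induction Q using MvPolynomial.induction_on' with
    | add p q hp hq => rw [fis_add_right, hp, hq, map_add, fis_add_right]
    | monomial b d =>
      rw [X, monomial_mul, one_mul, pderiv_monomial, fis_monomial, fis_monomial]
      by_cases h : Finsupp.single s 1 + a = b
      · subst h
        have : a = Finsupp.single s 1 + a - Finsupp.single s 1 := by
          ext x; simp
        rw [if_pos rfl, if_pos this, add_comm, mfact_add_single]
        simp; ring
      · rw [if_neg h]
        split_ifs with h2
        · have : b s = 0 := by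
            by_contra hb
            apply h
            rw [h2, add_comm]
            ext x
            by_cases hx : s = x
            · subst hx; simp; omega
            · simp [Finsupp.single_apply, hx]
          simp [this]
        · rfl

/-- The Fischer inner product core. -/
@[reducible] noncomputable def fisCore : InnerProductSpace.Core ℂ (MvPolynomial σ ℂ) where
  inner := fis
  conj_inner_symm := fis_conj
  re_inner_nonneg P := by
    change 0 ≤ (fis P P).re
    rw [fis_self, Complex.ofReal_re]
    exact Finset.sum_nonneg fun a _ => mul_nonneg (Nat.cast_nonneg _) (Complex.normSq_nonneg _)
  add_left := fis_add_left
  smul_left P Q c := fis_smul_left c P Q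
  definite := fis_self_eq_zero

lemma exists_orth (W : Submodule ℂ (MvPolynomial σ ℂ)) [FiniteDimensional ℂ W]
    (P : MvPolynomial σ ℂ) : ∃ w ∈ W, ∃ z, (∀ v ∈ W, fis v z = 0) ∧ P = w + z := by
  letI : NormedAddCommGroup (MvPolynomial σ ℂ) :=
    (fisCore (σ := σ)).toNormedAddCommGroup
  letI : InnerProductSpace ℂ (MvPolynomial σ ℂ) := InnerProductSpace.ofCore fisCore.toCore
  obtain ⟨y, hy, z, hz, h⟩ := W.exists_add_mem_mem_orthogonal P
  exact ⟨y, hy, z, fun v hv => (Submodule.mem_orthogonal W z).1 hz v hv, h⟩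

end Fischer

end FischerDec

namespace FischerDec

set_option linter.unusedSectionVars false

section Count

/-- Polynomials of degree at most `d`. -/
noncomputable def RD (σ : Type*) (d : ℕ) : Submodule ℂ (MvPolynomial σ ℂ) :=
  restrictSupport ℂ {a | a.degree ≤ d}

lemma mem_RD {σ : Type*} {d : ℕ} {P : MvPolynomial σ ℂ} :
    P ∈ RD σ d ↔ ∀ a ∈ P.support, a.degree ≤ d :=
  mem_restrictSupport_iff ℂ

lemma monomial_mem_RD {σ : Type*} {d : ℕ} {a : σ →₀ ℕ} (c : ℂ) (h : a.degree ≤ d) :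
    monomial a c ∈ RD σ d := (monomial_mem_restrictSupport ℂ).2 (Or.inl h)

lemma RD_mono {σ : Type*} {d e : ℕ} (h : d ≤ e) : RD σ d ≤ RD σ e :=
  restrictSupport_mono _ fun _ ha => le_trans ha h

lemma RD_eq_span (σ : Type*) (d : ℕ) :
    RD σ d = Submodule.span ℂ ((fun a => monomial a (1 : ℂ)) '' {a | a.degree ≤ d}) :=
  restrictSupport_eq_span _ _

lemma mul_mem_RD {σ : Type*} {d e : ℕ} {P Q : MvPolynomial σ ℂ} (hP : P ∈ RD σ d)
    (hQ : Q ∈ RD σ e) : P * Q ∈ RD σ (d + e) := by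
  classical
  rw [mem_RD] at *
  intro a ha
  obtain ⟨b, hb, c, hc, rfl⟩ := Finset.mem_add.1 (support_mul P Q ha)
  rw [map_add]
  exact add_le_add (hP b hb) (hQ c hc)

lemma exists_mem_RD {σ : Type*} (P : MvPolynomial σ ℂ) : ∃ d, P ∈ RD σ d :=
  ⟨P.support.sup fun a => a.degree, mem_RD.2 fun _ ha =>
    Finset.le_sup (f := fun a : σ →₀ ℕ => a.degree) ha⟩

lemma finite_deg (σ : Type*) [Finite σ] (d : ℕ) : Finite {a : σ →₀ ℕ | a.degree ≤ d} :=
  (Finsupp.finite_of_degree_le d).to_subtype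

instance finiteRD (σ : Type*) [Finite σ] (d : ℕ) : FiniteDimensional ℂ (RD σ d) := by
  have := finite_deg σ d
  exact Module.Finite.of_basis (basisRestrictSupport ℂ {a : σ →₀ ℕ | a.degree ≤ d})

lemma finrank_RD (σ : Type*) (d : ℕ) :
    Module.finrank ℂ (RD σ d) = Nat.card {a : σ →₀ ℕ | a.degree ≤ d} :=
  Module.finrank_eq_nat_card_basis (basisRestrictSupport ℂ {a : σ →₀ ℕ | a.degree ≤ d})

lemma card_deg_congr {σ τ : Type*} (e : σ ≃ τ) (d : ℕ) :
    Nat.card {a : σ →₀ ℕ | a.degree ≤ d} = Nat.card {a : τ →₀ ℕ | a.degree ≤ d} := by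
  refine Nat.card_congr (Equiv.subtypeEquiv (Finsupp.domCongr e).toEquiv fun a => ?_)
  have : (Finsupp.equivMapDomain e a).degree = a.degree := by
    rw [Finsupp.equivMapDomain_eq_mapDomain, Finsupp.degree_mapDomain]
  simp [this]

/-- Standard exponents: not divisible by any leading exponent. -/
def Std {τ ι : Type*} (l : ι → τ →₀ ℕ) (d : ℕ) : Set (τ →₀ ℕ) :=
  {a | a.degree ≤ d ∧ ∀ i, ¬ l i ≤ a}

variable {σ τ ι : Type*} [Fintype σ] [Fintype τ] [Fintype ι]

/-- Families with twice the total at most `d`. -/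
abbrev Fam (ι : Type*) [Fintype ι] (d : ℕ) : Type _ := {n : ι → ℕ // 2 * ∑ i, n i ≤ d}

instance finiteFam (d : ℕ) : Finite (Fam ι d) := by
  have : Finite {n : ι → ℕ // ∀ i, n i ∈ Set.Iic d} := by
    have : Set.Finite {n : ι → ℕ | ∀ i, n i ∈ Set.Iic d} := Set.Finite.pi' fun i => Set.finite_Iic d
    exact this.to_subtype
  refine Finite.of_injective
    (fun n : Fam ι d => (⟨n.1, fun i => ?_⟩ : {n : ι → ℕ // ∀ i, n i ∈ Set.Iic d})) ?_
  · have := Finset.single_le_sum (f := n.1) (fun _ _ => Nat.zero_le _) (Finset.mem_univ i)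
    have := n.2
    simp only [Set.mem_Iic]
    omega
  · intro a b h
    simpa [Subtype.ext_iff] using h

noncomputable instance fintypeFam (d : ℕ) : Fintype (Fam ι d) := Fintype.ofFinite _

lemma std_finite (l : ι → τ →₀ ℕ) (d : ℕ) : Finite (Std l d) :=
  ((Finsupp.finite_of_degree_le d).subset fun _ h => h.1).to_subtype

lemma count (l : ι → τ →₀ ℕ) (hl : ∀ i, (l i).degree = 2)
    (hd : ∀ i j x, l i x ≠ 0 → l j x ≠ 0 → i = j) (d : ℕ) :
    ∑ n : Fam ι d, Nat.card (Std l (d - 2 * ∑ i, n.1 i)) ≤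
      Nat.card {a : τ →₀ ℕ | a.degree ≤ d} := by
  have := fun e => std_finite l e
  have := finite_deg τ d
  rw [← Nat.card_sigma]
  have key : ∀ (n n' : ι → ℕ) (a a' : τ →₀ ℕ), (∀ i, ¬ l i ≤ a') →
      ∑ i, n i • l i + a = ∑ i, n' i • l i + a' → ∀ i, n i ≤ n' i := by
    intro n n' a a' ha' h i
    by_contra hlt
    apply ha' i
    intro x
    by_cases hx : l i x = 0
    · rw [hx]; exact Nat.zero_le _
    have hs : ∀ n : ι → ℕ, (∑ j, n j • l j) x = n i * l i x := by
      intro n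
      rw [Finsupp.finsetSum_apply, Finset.sum_eq_single i]
      · simp
      · intro j _ hj
        have : l j x = 0 := by
          by_contra h0
          exact hj (hd j i x h0 hx)
        simp [this]
      · simp
    have h1 := DFunLike.congr_fun h x
    rw [Finsupp.add_apply, Finsupp.add_apply, hs, hs] at h1
    have h2 : (n' i + 1) * l i x ≤ n i * l i x := Nat.mul_le_mul_right _ (by omega)
    rw [add_mul] at h2
    omega
  refine Nat.card_le_card_of_injective
    (fun p : (Σ n : Fam ι d, Std l (d - 2 * ∑ i, n.1 i)) =>
      (⟨∑ i, p.1.1 i • l i + p.2.1, ?_⟩ : {a : τ →₀ ℕ | a.degree ≤ d})) ?_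
  · have h1 := p.2.2.1
    have h2 := p.1.2
    simp only [Set.mem_ofPred_eq, map_add, map_sum, map_nsmul, hl, smul_eq_mul]
    rw [← Finset.sum_mul]
    omega
  · rintro ⟨⟨n, hn⟩, ⟨a, ha⟩⟩ ⟨⟨n', hn'⟩, ⟨a', ha'⟩⟩ h
    simp only [Subtype.mk.injEq] at h
    have hnn : n = n' := funext fun i =>
      le_antisymm (key n n' a a' ha'.2 h i) (key n' n a' a ha.2 h.symm i)
    subst hnn
    have : a = a' := add_left_cancel h
    subst this
    rfl

/-- Product of powers. -/
noncomputable def qpow (q : ι → MvPolynomial σ ℂ) (n : ι → ℕ) : MvPolynomial σ ℂ :=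
  ∏ i, q i ^ n i

lemma qpow_mem (q : ι → MvPolynomial σ ℂ) (hq : ∀ i, q i ∈ RD σ 2) (n : ι → ℕ) :
    qpow q n ∈ RD σ (2 * ∑ i, n i) := by
  classical
  have hp : ∀ i k, q i ^ k ∈ RD σ (2 * k) := by
    intro i k
    induction k with
    | zero => simpa using monomial_mem_RD (σ := σ) (d := 0) (a := 0) 1 (by simp)
    | succ k ih => rw [pow_succ]; exact mul_mem_RD ih (hq i)
  unfold qpow
  generalize (Finset.univ : Finset ι) = s
  induction s using Finset.induction_on with
  | empty => simpa using monomial_mem_RD (σ := σ) (d := 0) (a := 0) 1 (by simp)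
  | insert a s ha ih =>
    rw [Finset.prod_insert ha, Finset.sum_insert ha, mul_add]
    exact mul_mem_RD (hp a _) ih

/-- The graded pieces sum map. -/
noncomputable def Phi (q : ι → MvPolynomial σ ℂ) (Har : Submodule ℂ (MvPolynomial σ ℂ)) (d : ℕ) :
    (∀ n : Fam ι d, ↥(Har ⊓ RD σ (d - 2 * ∑ i, n.1 i))) →ₗ[ℂ] MvPolynomial σ ℂ :=
  ∑ n : Fam ι d, (LinearMap.mulLeft ℂ (qpow q n.1)) ∘ₗ (Submodule.subtype _) ∘ₗ (LinearMap.proj n)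

lemma Phi_apply (q : ι → MvPolynomial σ ℂ) (Har : Submodule ℂ (MvPolynomial σ ℂ)) (d : ℕ)
    (f : ∀ n : Fam ι d, ↥(Har ⊓ RD σ (d - 2 * ∑ i, n.1 i))) :
    Phi q Har d f = ∑ n : Fam ι d, qpow q n.1 * (f n : MvPolynomial σ ℂ) := by
  simp [Phi]

lemma Phi_single (q : ι → MvPolynomial σ ℂ) (Har : Submodule ℂ (MvPolynomial σ ℂ)) (d : ℕ)
    (n : ι → ℕ) (hn : 2 * ∑ i, n i ≤ d) (H : MvPolynomial σ ℂ)
    (hH : H ∈ Har ⊓ RD σ (d - 2 * ∑ i, n i)) :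
    qpow q n * H ∈ LinearMap.range (Phi q Har d) := by
  classical
  refine ⟨Pi.single ⟨n, hn⟩ ⟨H, hH⟩, ?_⟩
  rw [Phi_apply, Finset.sum_eq_single ⟨n, hn⟩]
  · simp
  · intro b _ hb
    simp [Pi.single_eq_of_ne hb]
  · simp

lemma Phi_range_le (q : ι → MvPolynomial σ ℂ) (hq : ∀ i, q i ∈ RD σ 2)
    (Har : Submodule ℂ (MvPolynomial σ ℂ)) (d : ℕ) :
    LinearMap.range (Phi q Har d) ≤ RD σ d := by
  rintro _ ⟨f, rfl⟩
  rw [Phi_apply]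
  refine Submodule.sum_mem _ fun n _ => ?_
  have := mul_mem_RD (qpow_mem q hq n.1) (f n).2.2
  rwa [Nat.add_sub_cancel' n.2] at this

lemma qpow_succ (q : ι → MvPolynomial σ ℂ) (n : ι → ℕ) [DecidableEq ι] (i : ι) :
    qpow q (n + Pi.single i 1) = q i * qpow q n := by
  unfold qpow
  simp only [Pi.add_apply, pow_add, Finset.prod_mul_distrib]
  rw [mul_comm]
  congr 1
  rw [Finset.prod_eq_single i]
  · simp
  · intro b _ hb; simp [hb]
  · simp

lemma Phi_range (q : ι → MvPolynomial σ ℂ) 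
    (Har : Submodule ℂ (MvPolynomial σ ℂ))
    (h0 : ∀ d, d < 2 → RD σ d ≤ Har)
    (h2 : ∀ d, ∀ P ∈ RD σ (d + 2), ∃ H ∈ Har ⊓ RD σ (d + 2), ∃ A : ι → MvPolynomial σ ℂ,
      (∀ i, A i ∈ RD σ d) ∧ P = H + ∑ i, q i * A i) (d : ℕ) :
    RD σ d ≤ LinearMap.range (Phi q Har d) := by
  classical
  have hz : ∀ d, Har ⊓ RD σ d ≤ LinearMap.range (Phi q Har d) := by
    intro d H hH
    have := Phi_single q Har d 0 (by simp) H (by simpa using hH)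
    simpa [qpow] using this
  induction d using Nat.strong_induction_on with
  | _ d ih =>
    by_cases hd : d < 2
    · exact fun P hP => hz d ⟨h0 d hd hP, hP⟩
    obtain ⟨e, rfl⟩ : ∃ e, d = e + 2 := ⟨d - 2, by omega⟩
    intro P hP
    obtain ⟨H, hH, A, hA, rfl⟩ := h2 e P hP
    refine Submodule.add_mem _ (hz _ hH) (Submodule.sum_mem _ fun i _ => ?_)
    obtain ⟨f, hf⟩ := ih e (by omega) (hA i)
    rw [← hf, Phi_apply, Finset.mul_sum]
    refine Submodule.sum_mem _ fun n _ => ?_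
    rw [← mul_assoc, ← qpow_succ]
    have hs : ∑ j, (n.1 + Pi.single i 1 : ι → ℕ) j = ∑ j, n.1 j + 1 := by
      simp [Finset.sum_add_distrib]
    apply Phi_single
    · rw [hs]; have := n.2; omega
    · rw [hs]
      have := (f n).2
      have e1 : e + 2 - 2 * (∑ j, n.1 j + 1) = e - 2 * ∑ j, n.1 j := by omega
      rwa [e1]

theorem abstract_dec (q : ι → MvPolynomial σ ℂ)
    (Har : Submodule ℂ (MvPolynomial σ ℂ))
    (h0 : ∀ d, d < 2 → RD σ d ≤ Har)
    (h2 : ∀ d, ∀ P ∈ RD σ (d + 2), ∃ H ∈ Har ⊓ RD σ (d + 2), ∃ A : ι → MvPolynomial σ ℂ,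
      (∀ i, A i ∈ RD σ d) ∧ P = H + ∑ i, q i * A i)
    (e : σ ≃ τ)
    (l : ι → τ →₀ ℕ) (hl : ∀ i, (l i).degree = 2)
    (hd : ∀ i j x, l i x ≠ 0 → l j x ≠ 0 → i = j)
    (hdim : ∀ d, Module.finrank ℂ ↥(Har ⊓ RD σ d) ≤ Nat.card (Std l d))
    (P : MvPolynomial σ ℂ) :
    ∃! H : (ι → ℕ) →₀ MvPolynomial σ ℂ,
      (∀ n, H n ∈ Har) ∧ P = H.sum fun n Hn => qpow q n * Hn := by
  classical
  have hfd : ∀ d, FiniteDimensional ℂ ↥(Har ⊓ RD σ d) := fun d =>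
    Submodule.finiteDimensional_of_le (inf_le_right)
  have hinj : ∀ d, Function.Injective (Phi q Har d) := by
    intro d
    rw [← LinearMap.ker_eq_bot, ← Submodule.finrank_eq_zero]
    have h1 := LinearMap.finrank_range_add_finrank_ker (Phi q Har d)
    have h3 := Submodule.finrank_mono (Phi_range q Har h0 h2 d)
    rw [finrank_RD, card_deg_congr e] at h3
    have h4 := count l hl hd d
    have h5 : Module.finrank ℂ (∀ n : Fam ι d, ↥(Har ⊓ RD σ (d - 2 * ∑ i, n.1 i))) ≤
        ∑ n : Fam ι d, Nat.card (Std l (d - 2 * ∑ i, n.1 i)) := by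
      rw [Module.finrank_pi_fintype]
      exact Finset.sum_le_sum fun n _ => hdim _
    omega
  have huniq : ∀ G : (ι → ℕ) →₀ MvPolynomial σ ℂ, (∀ n, G n ∈ Har) →
      (G.sum fun n Hn => qpow q n * Hn) = 0 → G = 0 := by
    intro G hG hsum
    choose D hD using fun n => exists_mem_RD (G n)
    set d := G.support.sup fun n => 2 * ∑ i, n i + D n with hdd
    have hle : ∀ n ∈ G.support, 2 * ∑ i, n i + D n ≤ d := fun n hn =>
      Finset.le_sup (f := fun n => 2 * ∑ i, n i + D n) hn
    let f : ∀ n : Fam ι d, ↥(Har ⊓ RD σ (d - 2 * ∑ i, n.1 i)) := fun n =>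
      ⟨G n.1, hG _, by
        by_cases hn : n.1 ∈ G.support
        · have := hle _ hn
          exact RD_mono (by omega) (hD n.1)
        · rw [Finsupp.notMem_support_iff.1 hn]; exact Submodule.zero_mem _⟩
    have hf : Phi q Har d f = 0 := by
      rw [Phi_apply, ← hsum, Finsupp.sum]
      symm
      refine Finset.sum_bij_ne_zero (fun n hn _ => ⟨n, by have := hle n hn; omega⟩) ?_ ?_ ?_ ?_
      · simp
      · intro a _ _ b _ _ h; simpa using h
      · intro b _ hb
        refine ⟨b.1, ?_, hb, rfl⟩
        rw [Finsupp.mem_support_iff]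
        intro h0
        apply hb
        simp [f, h0]
      · intro a _ _; rfl
    have hf0 : f = 0 := hinj d (by rw [hf, map_zero])
    ext1 n
    by_cases hn : n ∈ G.support
    · have := congrArg Subtype.val (congrFun hf0 ⟨n, by have := hle n hn; omega⟩)
      simpa [f] using this
    · simpa using hn
  obtain ⟨d, hPd⟩ := exists_mem_RD P
  obtain ⟨f, hf⟩ := Phi_range q Har h0 h2 d hPd
  refine ⟨∑ n : Fam ι d, Finsupp.single n.1 (f n : MvPolynomial σ ℂ), ⟨?_, ?_⟩, ?_⟩
  · intro n
    rw [Finsupp.finsetSum_apply]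
    refine Submodule.sum_mem _ fun m _ => ?_
    rw [Finsupp.single_apply]
    split_ifs
    · exact (f m).2.1
    · exact Submodule.zero_mem _
  · rw [← hf, Phi_apply, ← Finsupp.sum_finsetSum_index]
    · refine Finset.sum_congr rfl fun n _ => ?_
      rw [Finsupp.sum_single_index]; simp
    · simp
    · intros; rw [mul_add]
  · rintro H' ⟨hH', hP'⟩
    have hH : ∀ n, (∑ n : Fam ι d, Finsupp.single n.1 (f n : MvPolynomial σ ℂ)) n ∈ Har := by
      intro n
      rw [Finsupp.finsetSum_apply]
      refine Submodule.sum_mem _ fun m _ => ?_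
      rw [Finsupp.single_apply]
      split_ifs
      · exact (f m).2.1
      · exact Submodule.zero_mem _
    rw [← sub_eq_zero]
    apply huniq
    · intro n
      rw [Finsupp.sub_apply]
      exact Submodule.sub_mem _ (hH' n) (hH n)
    · rw [Finsupp.sum_sub_index (fun _ _ _ => mul_sub _ _ _), ← hP', ← hf, Phi_apply,
        ← Finsupp.sum_finsetSum_index]
      · rw [sub_eq_zero]
        refine Finset.sum_congr rfl fun n _ => ?_
        rw [Finsupp.sum_single_index]; simp
      · simp
      · intros; rw [mul_add]

end Count

end FischerDec

namespace FischerDec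

set_option linter.unusedSectionVars false

section Reduce
variable {σ τ ι A : Type*} [Fintype σ] [Fintype τ] [Fintype ι] [Fintype A]

lemma reduction (W : (τ →₀ ℕ) →+ ℕ) (c : ι → A → ℂ) (b : ι → A → τ →₀ ℕ) (a0 : ι → A)
    (hdeg : ∀ i a, (b i a).degree = 2) (hlt : ∀ i a, a ≠ a0 i → W (b i a) < W (b i (a0 i)))
    (hc : ∀ i, c i (a0 i) ≠ 0) (d : ℕ) (α : τ →₀ ℕ) (hα : α.degree ≤ d) :
    monomial α (1 : ℂ) ∈
      Submodule.span ℂ ((fun a => monomial a (1 : ℂ)) '' Std (fun i => b i (a0 i)) d) ⊔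
      (Ideal.span (Set.range fun i => ∑ a, monomial (b i a) (c i a))).restrictScalars ℂ := by
  classical
  obtain ⟨N, hN⟩ : ∃ N, N = W α := ⟨_, rfl⟩
  induction N using Nat.strong_induction_on generalizing α with
  | _ N ih =>
    by_cases hs : ∀ i, ¬ b i (a0 i) ≤ α
    · exact Submodule.mem_sup_left (Submodule.subset_span ⟨α, ⟨hα, hs⟩, rfl⟩)
    push Not at hs
    obtain ⟨i, hi⟩ := hs
    obtain ⟨γ, rfl⟩ := exists_add_of_le hi
    rw [map_add, hdeg] at hα
    set S := Submodule.span ℂ ((fun a => monomial a (1 : ℂ)) '' Std (fun i => b i (a0 i)) d) ⊔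
      (Ideal.span (Set.range fun i => ∑ a, monomial (b i a) (c i a))).restrictScalars ℂ with hS
    have h1 : (∑ a, monomial (b i a) (c i a)) * monomial γ (1 : ℂ) ∈ S := by
      refine Submodule.mem_sup_right ?_
      rw [Submodule.restrictScalars_mem]
      exact Ideal.mul_mem_right _ _ (Ideal.subset_span ⟨i, rfl⟩)
    rw [← Finset.add_sum_erase _ _ (Finset.mem_univ (a0 i)), add_mul, Finset.sum_mul] at h1
    have h2 : ∑ a ∈ Finset.univ.erase (a0 i), monomial (b i a) (c i a) * monomial γ (1 : ℂ) ∈ S := by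
      refine Submodule.sum_mem _ fun a ha => ?_
      have hne := Finset.ne_of_mem_erase ha
      have h3 := ih (W (b i a + γ)) (by
        rw [hN, map_add, map_add]; have := hlt i a hne; omega) (b i a + γ)
        (by rw [map_add, hdeg]; exact hα) rfl
      have h4 := Submodule.smul_mem _ (c i a) h3
      rw [smul_monomial] at h4
      rw [monomial_mul]
      simpa using h4
    have h5 := (Submodule.add_mem_iff_left _ h2).1 h1
    have h6 := Submodule.smul_mem _ (c i (a0 i))⁻¹ h5
    rw [monomial_mul, smul_monomial] at h6
    simpa [hc i] using h6

lemma finrank_har (W : (τ →₀ ℕ) →+ ℕ) (c : ι → A → ℂ) (b : ι → A → τ →₀ ℕ) (a0 : ι → A)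
    (hdeg : ∀ i a, (b i a).degree = 2) (hlt : ∀ i a, a ≠ a0 i → W (b i a) < W (b i (a0 i)))
    (hc : ∀ i, c i (a0 i) ≠ 0)
    (φ : MvPolynomial τ ℂ →ₐ[ℂ] MvPolynomial σ ℂ)
    (hφ : ∀ d, ∀ P ∈ RD σ d, ∃ P' ∈ RD τ d, φ P' = P)
    (q : ι → MvPolynomial σ ℂ) (hq : ∀ i, φ (∑ a, monomial (b i a) (c i a)) = q i)
    (Har : Submodule ℂ (MvPolynomial σ ℂ))
    (hHar : ∀ P ∈ Har, P ∈ Ideal.span (Set.range q) → P = 0) (d : ℕ) :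
    Module.finrank ℂ ↥(Har ⊓ RD σ d) ≤ Nat.card (Std (fun i => b i (a0 i)) d) := by
  classical
  set l : ι → τ →₀ ℕ := fun i => b i (a0 i) with hl
  have := std_finite l d
  let _ := Fintype.ofFinite (Std l d)
  let I : Submodule ℂ (MvPolynomial σ ℂ) := (Ideal.span (Set.range q)).restrictScalars ℂ
  let π : ↥(Har ⊓ RD σ d) →ₗ[ℂ] (MvPolynomial σ ℂ ⧸ I) := I.mkQ ∘ₗ Submodule.subtype _
  have hinj : Function.Injective π := by
    rw [← LinearMap.ker_eq_bot, LinearMap.ker_eq_bot']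
    intro P hP
    have : (P : MvPolynomial σ ℂ) ∈ I := by simpa [π] using hP
    exact Subtype.ext (hHar _ P.2.1 this)
  let v : Std l d → MvPolynomial σ ℂ ⧸ I := fun a => I.mkQ (φ (monomial a.1 1))
  have hle : LinearMap.range π ≤ Submodule.span ℂ (Set.range v) := by
    rintro _ ⟨P, rfl⟩
    obtain ⟨P', hP', hPP⟩ := hφ d P.1 P.2.2
    change I.mkQ P.1 ∈ _
    rw [← hPP]
    have h1 : RD τ d ≤ (Submodule.span ℂ (Set.range v)).comap (I.mkQ ∘ₗ φ.toLinearMap) := by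
      rw [RD_eq_span, Submodule.span_le]
      rintro _ ⟨α, hα, rfl⟩
      have h2 := reduction W c b a0 hdeg hlt hc d α hα
      refine (sup_le ?_ ?_ : _ ≤ (Submodule.span ℂ (Set.range v)).comap
        (I.mkQ ∘ₗ φ.toLinearMap)) h2
      · rw [Submodule.span_le]
        rintro _ ⟨a, ha, rfl⟩
        exact Submodule.subset_span ⟨⟨a, ha⟩, rfl⟩
      · intro x hx
        have h3 : Ideal.span (Set.range fun i => ∑ a, monomial (b i a) (c i a)) ≤
            (Ideal.span (Set.range q)).comap φ := by
          rw [Ideal.span_le]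
          rintro _ ⟨i, rfl⟩
          change φ _ ∈ Ideal.span (Set.range q)
          rw [hq]
          exact Ideal.subset_span ⟨i, rfl⟩
        have h4 : φ x ∈ I := h3 hx
        have h5 : I.mkQ (φ x) = 0 := by simpa using h4
        change I.mkQ (φ x) ∈ Submodule.span ℂ (Set.range v)
        rw [h5]
        exact Submodule.zero_mem _
    exact h1 hP'
  rw [← LinearMap.finrank_range_of_inj hinj, Nat.card_eq_fintype_card]
  have : FiniteDimensional ℂ (Submodule.span ℂ (Set.range v)) :=
    FiniteDimensional.span_of_finite _ (Set.finite_range v)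
  exact (Submodule.finrank_mono hle).trans (finrank_range_le_card v)

lemma fischer_split [DecidableEq σ] (q : ι → MvPolynomial σ ℂ)
    (hq : ∀ i, q i ∈ RD σ 2) (D : ι → MvPolynomial σ ℂ → MvPolynomial σ ℂ)
    (hD : ∀ i P Q, fis (q i * P) Q = fis P (D i Q))
    (hDd : ∀ i d, ∀ P ∈ RD σ (d + 2), D i P ∈ RD σ d)
    (Har : Submodule ℂ (MvPolynomial σ ℂ)) (hHar : ∀ P, P ∈ Har ↔ ∀ i, D i P = 0)
    (d : ℕ) (P : MvPolynomial σ ℂ) (hP : P ∈ RD σ (d + 2)) :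
    ∃ H ∈ Har ⊓ RD σ (d + 2), ∃ A : ι → MvPolynomial σ ℂ,
      (∀ i, A i ∈ RD σ d) ∧ P = H + ∑ i, q i * A i := by
  classical
  let F : (ι → RD σ d) →ₗ[ℂ] MvPolynomial σ ℂ :=
    ∑ i, (LinearMap.mulLeft ℂ (q i)) ∘ₗ (Submodule.subtype _) ∘ₗ (LinearMap.proj i)
  have hF : ∀ f, F f = ∑ i, q i * (f i : MvPolynomial σ ℂ) := by intro f; simp [F]
  obtain ⟨w, ⟨f, rfl⟩, z, hz, rfl⟩ := exists_orth (LinearMap.range F) P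
  have hw : F f ∈ RD σ (d + 2) := by
    rw [hF]
    refine Submodule.sum_mem _ fun i _ => ?_
    rw [add_comm]
    exact mul_mem_RD (hq i) (f i).2
  have hz2 : z ∈ RD σ (d + 2) := (Submodule.add_mem_iff_right _ hw).1 hP
  refine ⟨z, ⟨(hHar z).2 fun i => ?_, hz2⟩, fun i => f i, fun i => (f i).2, ?_⟩
  · apply fis_self_eq_zero
    rw [← hD]
    apply hz
    refine ⟨Pi.single i ⟨D i z, hDd i d z hz2⟩, ?_⟩
    rw [hF, Finset.sum_eq_single i]
    · simp
    · intro b _ hb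
      simp [Pi.single_eq_of_ne hb]
    · simp
  · rw [hF, add_comm]

lemma har_inf_ideal [DecidableEq σ] (q : ι → MvPolynomial σ ℂ)
    (D : ι → MvPolynomial σ ℂ → MvPolynomial σ ℂ)
    (hD : ∀ i P Q, fis (q i * P) Q = fis P (D i Q))
    (P : MvPolynomial σ ℂ) (hP : ∀ i, D i P = 0) (hI : P ∈ Ideal.span (Set.range q)) : P = 0 := by
  have : ∀ Q ∈ Ideal.span (Set.range q), fis Q P = 0 := by
    intro Q hQ
    obtain ⟨c, rfl⟩ := (Submodule.mem_span_range_iff_exists_fun _).1 hQ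
    rw [fis_sum_left]
    refine Finset.sum_eq_zero fun i _ => ?_
    rw [smul_eq_mul, mul_comm, hD, hP, fis_zero_right]
  exact fis_self_eq_zero P (this P hI)

end Reduce

end FischerDec

namespace FischerDec

set_option linter.unusedSimpArgs false

section Concrete

lemma one_mem_RD (σ : Type*) (d : ℕ) : (1 : MvPolynomial σ ℂ) ∈ RD σ d :=
  monomial_mem_RD (σ := σ) (d := d) (a := 0) 1 (by simp)

lemma X_mem_RD {σ : Type*} (x : σ) : (X x : MvPolynomial σ ℂ) ∈ RD σ 1 :=
  monomial_mem_RD (σ := σ) (d := 1) (a := Finsupp.single x 1) 1 (by simp)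

lemma aeval_mem_RD {σ τ : Type*} (g : σ → MvPolynomial τ ℂ) (hg : ∀ x, g x ∈ RD τ 1) (d : ℕ)
    (P : MvPolynomial σ ℂ) (hP : P ∈ RD σ d) : aeval g P ∈ RD τ d := by
  have hm : ∀ a : σ →₀ ℕ, aeval g (monomial a (1 : ℂ)) ∈ RD τ a.degree := by
    intro a
    induction a using Finsupp.induction_linear with
    | zero => simpa using one_mem_RD τ 0
    | add a b ha hb =>
      rw [← one_mul (1 : ℂ), ← monomial_mul, map_mul, map_add]
      exact mul_mem_RD ha hb
    | single x n =>
      rw [← X_pow_eq_monomial, map_pow, aeval_X, Finsupp.degree_single]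
      induction n with
      | zero => simpa using one_mem_RD τ 0
      | succ n ih => rw [pow_succ]; exact mul_mem_RD ih (hg x)
  have : RD σ d ≤ (RD τ d).comap (aeval g).toLinearMap := by
    rw [RD_eq_span, Submodule.span_le]
    rintro _ ⟨a, ha, rfl⟩
    exact RD_mono ha (hm a)
  exact this hP

lemma pderiv_mem_RD {σ : Type*} (x : σ) (d : ℕ) (P : MvPolynomial σ ℂ) (hP : P ∈ RD σ (d + 1)) :
    pderiv x P ∈ RD σ d := by
  classical
  have : RD σ (d + 1) ≤ (RD σ d).comap (pderiv x).toLinearMap := by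
    rw [RD_eq_span, Submodule.span_le]
    rintro _ ⟨a, ha, rfl⟩
    change pderiv x (monomial a (1 : ℂ)) ∈ RD σ d
    rw [pderiv_monomial]
    by_cases h : a x = 0
    · simp [h]
    · apply monomial_mem_RD
      have h1 : Finsupp.single x 1 ≤ a := by
        rw [Finsupp.single_le_iff]; omega
      have h2 := congrArg Finsupp.degree (tsub_add_cancel_of_le h1)
      rw [map_add, Finsupp.degree_single] at h2
      have : a.degree ≤ d + 1 := ha
      omega
  exact this hP

lemma pderiv_RD_zero {σ : Type*} (x : σ) (P : MvPolynomial σ ℂ) (hP : P ∈ RD σ 0) :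
    pderiv x P = 0 := by
  classical
  have : RD σ 0 ≤ LinearMap.ker (pderiv x).toLinearMap := by
    rw [RD_eq_span, Submodule.span_le]
    rintro _ ⟨a, ha, rfl⟩
    have h0 : a.degree = 0 := Nat.le_zero.1 ha
    have : a = 0 := (Finsupp.degree_eq_zero_iff a).1 h0
    change pderiv x (monomial a (1 : ℂ)) = 0
    rw [this, pderiv_monomial]
    simp
  exact this hP

lemma mixedLap_mem (k m : ℕ) (i j : Fin k) (d : ℕ) (P : MvPolynomial (Fin k × Fin m) ℂ)
    (hP : P ∈ RD _ (d + 2)) : mixedLap k m i j P ∈ RD _ d :=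
  Submodule.sum_mem _ fun _ _ => pderiv_mem_RD _ _ _ (pderiv_mem_RD _ _ _ hP)

lemma mixedLap_zero (k m : ℕ) (i j : Fin k) (P : MvPolynomial (Fin k × Fin m) ℂ)
    (hP : P ∈ RD _ 1) : mixedLap k m i j P = 0 :=
  Finset.sum_eq_zero fun _ _ => pderiv_RD_zero _ _ (pderiv_mem_RD _ _ _ hP)

lemma r2_adj (k m : ℕ) (i j : Fin k) (P Q : MvPolynomial (Fin k × Fin m) ℂ) :
    fis (r2 k m i j * P) Q = fis P (mixedLap k m i j Q) := by
  rw [r2, mixedLap, Finset.sum_mul, fis_sum_left, fis_sum_right]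
  refine Finset.sum_congr rfl fun s _ => ?_
  rw [mul_comm (X (i, s)), mul_assoc, fis_X_mul, fis_X_mul]

lemma r2_mem (k m : ℕ) (i j : Fin k) : r2 k m i j ∈ RD _ 2 :=
  Submodule.sum_mem _ fun _ _ => mul_mem_RD (X_mem_RD _) (X_mem_RD _)

/-- The space of spherical harmonics. -/
noncomputable def Harm (k m : ℕ) : Submodule ℂ (MvPolynomial (Fin k × Fin m) ℂ) where
  carrier := {H | IsSphericalHarmonic k m H}
  zero_mem' i j _ := by simp [mixedLap]
  add_mem' {a b} ha hb i j hij := by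
    have h1 := ha i j hij
    have h2 := hb i j hij
    simp only [mixedLap, map_add, Finset.sum_add_distrib] at *
    rw [h1, h2, add_zero]
  smul_mem' c a ha i j hij := by
    have h1 := ha i j hij
    unfold mixedLap at h1 ⊢
    simp only [Derivation.map_smul]
    rw [← Finset.smul_sum, h1, smul_zero]

/-- Index type of the isotropic coordinates. -/
abbrev J (k r : ℕ) : Type := (Fin k ⊕ Fin k) ⊕ Fin (r + 1)

/-- Dual coordinate. -/
def dual {k r : ℕ} : J k r → J k r
  | .inl x => .inl x.swap
  | .inr t => .inr t

/-- Coefficients. -/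
noncomputable def cf {k r : ℕ} : J k r → ℂ
  | .inl _ => 1 / 2
  | .inr _ => 1

/-- Weights. -/
def wt {k r : ℕ} : Fin (k + 1) × J k r → ℕ
  | (i, .inl (.inl s)) => 2 * (k + 1) ^ 2 + 1 - 2 * i * (s + 1)
  | (i, .inl (.inr s)) => 2 * (k + 1) ^ 2 + 1 + 2 * i * (s + 1) - (s + 1) ^ 2
  | (_, .inr t) => if t = 0 then 2 * (k + 1) ^ 2 + 1 else 2 * (k + 1) ^ 2

/-- Pairs. -/
abbrev Pr (k : ℕ) : Type := {p : Fin k × Fin k // p.1 ≤ p.2}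

/-- Exponents of the terms of the quadrics in the isotropic coordinates. -/
noncomputable def bx {k r : ℕ} (p : Pr (k + 1)) (a : J k r) : Fin (k + 1) × J k r →₀ ℕ :=
  Finsupp.single (p.1.1, a) 1 + Finsupp.single (p.1.2, dual a) 1

/-- Leading index. -/
def ld {k r : ℕ} (p : Pr (k + 1)) : J k r :=
  if h : p.1.1 < p.1.2 then .inl (.inl ⟨p.1.2 - p.1.1 - 1, by
    have := p.1.2.2; have : p.1.1.1 < p.1.2.1 := h; omega⟩) else .inr 0

lemma wt_y {k r : ℕ} (i : Fin (k + 1)) (s : Fin k) :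
    ((wt (r := r) (i, .inl (.inl s)) : ℕ) : ℤ) = 2 * (k + 1) ^ 2 + 1 - 2 * i * (s + 1) := by
  have h1 : (i : ℕ) ≤ k + 1 := i.2.le
  have h2 : (s : ℕ) + 1 ≤ k + 1 := by have := s.2; omega
  have h3 := Nat.mul_le_mul h1 h2
  have : 2 * (i : ℕ) * (s + 1) ≤ 2 * (k + 1) ^ 2 + 1 := by nlinarith
  simp only [wt]
  rw [Nat.cast_sub this]
  push_cast
  ring

lemma wt_z {k r : ℕ} (i : Fin (k + 1)) (s : Fin k) :
    ((wt (r := r) (i, .inl (.inr s)) : ℕ) : ℤ) =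
      2 * (k + 1) ^ 2 + 1 + 2 * i * (s + 1) - (s + 1) ^ 2 := by
  have h2 : (s : ℕ) + 1 ≤ k + 1 := by have := s.2; omega
  have h3 := Nat.mul_le_mul h2 h2
  have : ((s : ℕ) + 1) ^ 2 ≤ 2 * (k + 1) ^ 2 + 1 + 2 * (i : ℕ) * (s + 1) := by nlinarith
  simp only [wt]
  rw [Nat.cast_sub this]
  push_cast
  ring

lemma wt_u {k r : ℕ} (i : Fin (k + 1)) (t : Fin (r + 1)) :
    ((wt (k := k) (i, .inr t) : ℕ) : ℤ) = 2 * (k + 1) ^ 2 + (if t = 0 then 1 else 0) := by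
  simp only [wt]
  split_ifs <;> simp

lemma weight_bx {k r : ℕ} (p : Pr (k + 1)) (a : J k r) :
    Finsupp.weight wt (bx p a) = wt (p.1.1, a) + wt (p.1.2, dual a) := by
  simp [bx, Finsupp.weight_single]

lemma weight_lt {k r : ℕ} (p : Pr (k + 1)) (a : J k r) (ha : a ≠ ld p) :
    Finsupp.weight wt (bx p a) <
      Finsupp.weight wt (bx p (ld (r := r) p)) := by
  rw [weight_bx, weight_bx]
  obtain ⟨⟨i, j⟩, hij⟩ := p
  have hij' : (i : ℕ) ≤ j := hij
  zify
  by_cases h : i < j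
  · have hlt : (i : ℕ) < j := h
    obtain ⟨δ, hδ⟩ : ∃ δ : ℕ, (j : ℕ) = i + δ + 1 := ⟨j - i - 1, by omega⟩
    have hv : (j : ℕ) - i - 1 = δ := by omega
    have hld : ld (r := r) ⟨(i, j), hij⟩ = .inl (.inl ⟨δ, by have := j.2; omega⟩) := by
      simp [ld, h, hv]
    rw [hld] at ha ⊢
    simp only [dual, Sum.swap_inl, wt_y, wt_z, hδ]
    push_cast
    rcases a with (s | s) | t
    · have hs : (s : ℤ) ≠ δ := by
        intro hs
        apply ha
        congr 2
        apply Fin.ext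
        exact_mod_cast hs
      have := sq_pos_of_ne_zero (sub_ne_zero.2 hs)
      simp only [dual, Sum.swap_inl, wt_y, wt_z, hδ]
      push_cast
      nlinarith
    · simp only [dual, Sum.swap_inr, wt_y, wt_z, hδ]
      push_cast
      nlinarith [mul_nonneg (Int.natCast_nonneg (s : ℕ)) (Int.natCast_nonneg δ)]
    · simp only [dual, wt_u]
      split_ifs <;> nlinarith
  · have hj : i = j := le_antisymm hij (not_lt.1 h)
    subst hj
    have hld : ld (r := r) ⟨(i, i), hij⟩ = .inr 0 := by simp [ld]
    rw [hld] at ha ⊢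
    simp only [dual, wt_u, if_true]
    rcases a with (s | s) | t
    · simp only [dual, Sum.swap_inl, wt_y, wt_z]
      nlinarith
    · simp only [dual, Sum.swap_inr, wt_y, wt_z]
      nlinarith
    · have ht : t ≠ 0 := fun h => ha (by rw [h])
      simp only [dual, wt_u, if_neg ht]
      linarith

lemma bx_degree {k r : ℕ} (p : Pr (k + 1)) (a : J k r) : (bx p a).degree = 2 := by
  simp [bx]

lemma bx_ne {k r : ℕ} (p : Pr (k + 1)) (a : J k r) (x) (h : bx p a x ≠ 0) :
    x = (p.1.1, a) ∨ x = (p.1.2, dual a) := by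
  classical
  by_contra hx
  push Not at hx
  apply h
  simp [bx, Finsupp.single_apply, hx.1.symm, hx.2.symm]

lemma ld_disj {k r : ℕ} (p p' : Pr (k + 1)) (x : Fin (k + 1) × J k r)
    (h : bx p (ld p) x ≠ 0) (h' : bx p' (ld p') x ≠ 0) : p = p' := by
  have h1 := bx_ne p _ x h
  have h2 := bx_ne p' _ x h'
  obtain ⟨⟨i, j⟩, hij⟩ := p
  obtain ⟨⟨i', j'⟩, hij'⟩ := p'
  have e1 : (i : ℕ) ≤ j := hij
  have e2 : (i' : ℕ) ≤ j' := hij'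
  suffices (i : ℕ) = i' ∧ (j : ℕ) = j' by
    have a1 := Fin.ext this.1
    have a2 := Fin.ext this.2
    subst a1; subst a2; rfl
  clear h h'
  unfold ld at h1 h2
  simp only [] at h1 h2
  by_cases hh : i < j <;> by_cases hh' : i' < j'
  · have f1 : (i : ℕ) < j := hh
    have f2 : (i' : ℕ) < j' := hh'
    simp only [dif_pos hh, dif_pos hh', dual, Sum.swap_inl] at h1 h2
    rcases h1 with rfl | rfl <;> rcases h2 with h2 | h2 <;>
      simp [Prod.ext_iff, Fin.ext_iff] at h2 <;> omega
  · simp only [dif_pos hh, dif_neg hh', dual, Sum.swap_inl] at h1 h2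
    rcases h1 with rfl | rfl <;> rcases h2 with h2 | h2 <;>
      simp [Prod.ext_iff, Fin.ext_iff] at h2
  · simp only [dif_neg hh, dif_pos hh', dual, Sum.swap_inl] at h1 h2
    rcases h1 with rfl | rfl <;> rcases h2 with h2 | h2 <;>
      simp [Prod.ext_iff, Fin.ext_iff] at h2
  · have f1 : ¬ (i : ℕ) < j := hh
    have f2 : ¬ (i' : ℕ) < j' := hh'
    simp only [dif_neg hh, dif_neg hh', dual] at h1 h2
    rcases h1 with rfl | rfl <;> rcases h2 with h2 | h2 <;>
      simp [Prod.ext_iff, Fin.ext_iff] at h2 <;> omega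

/-- Isotropic coordinates as linear forms. -/
noncomputable def gphi {k r m : ℕ} (e : J k r ≃ Fin m) :
    Fin (k + 1) × J k r → MvPolynomial (Fin (k + 1) × Fin m) ℂ
  | (i, .inl (.inl s)) => X (i, e (.inl (.inl s))) + C Complex.I * X (i, e (.inl (.inr s)))
  | (i, .inl (.inr s)) => X (i, e (.inl (.inl s))) - C Complex.I * X (i, e (.inl (.inr s)))
  | (i, .inr t) => X (i, e (.inr t))

/-- Old coordinates in terms of the isotropic ones. -/
noncomputable def gpsi0 {k r : ℕ} (i : Fin (k + 1)) :
    J k r → MvPolynomial (Fin (k + 1) × J k r) ℂ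
  | .inl (.inl s) => C (1 / 2) * (X (i, .inl (.inl s)) + X (i, .inl (.inr s)))
  | .inl (.inr s) => C (-Complex.I / 2) * (X (i, .inl (.inl s)) - X (i, .inl (.inr s)))
  | .inr t => X (i, .inr t)

lemma gphi_surj {k r m : ℕ} (e : J k r ≃ Fin m) (d : ℕ)
    (P : MvPolynomial (Fin (k + 1) × Fin m) ℂ) (hP : P ∈ RD _ d) :
    ∃ P' ∈ RD (Fin (k + 1) × J k r) d, aeval (gphi e) P' = P := by
  refine ⟨aeval (fun x : Fin (k + 1) × Fin m => gpsi0 x.1 (e.symm x.2)) P,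
    aeval_mem_RD _ ?_ d P hP, ?_⟩
  · rintro ⟨i, s⟩
    simp only
    have hC : ∀ c : ℂ, ∀ Q ∈ RD (Fin (k + 1) × J k r) 1, C c * Q ∈ RD _ 1 := by
      intro c Q hQ
      rw [← smul_eq_C_mul]
      exact Submodule.smul_mem _ _ hQ
    rcases e.symm s with (s | s) | t
    · exact hC _ _ (Submodule.add_mem _ (X_mem_RD _) (X_mem_RD _))
    · exact hC _ _ (Submodule.sub_mem _ (X_mem_RD _) (X_mem_RD _))
    · exact X_mem_RD _
  · rw [← AlgHom.comp_apply]
    have : (aeval (gphi e)).comp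
        (aeval (fun x : Fin (k + 1) × Fin m => gpsi0 x.1 (e.symm x.2))) = AlgHom.id ℂ _ := by
      apply algHom_ext
      rintro ⟨i, s⟩
      obtain ⟨a, rfl⟩ := e.surjective s
      rw [AlgHom.comp_apply, aeval_X]
      simp only [Equiv.symm_apply_apply, AlgHom.id_apply]
      rcases a with (s | s) | t
      · simp only [gpsi0, map_mul, map_add, aeval_X, algHom_C, gphi, algebraMap_eq]
        have : (C (1 / 2) : MvPolynomial (Fin (k + 1) × Fin m) ℂ) * 2 = 1 := by
          rw [← map_ofNat C 2, ← C_mul]; norm_num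
        linear_combination (X (i, e (.inl (.inl s)))) * this
      · simp only [gpsi0, map_mul, map_sub, aeval_X, algHom_C, gphi, algebraMap_eq]
        have : (C (-Complex.I / 2) : MvPolynomial (Fin (k + 1) × Fin m) ℂ) * C Complex.I * 2
            = 1 := by
          rw [← map_ofNat C 2, ← C_mul, ← C_mul, ← C_1]
          congr 1
          linear_combination -Complex.I_mul_I
        linear_combination (X (i, e (.inl (.inr s)))) * this
      · simp [gpsi0, gphi]
    rw [this]; rfl

lemma gphi_q {k r m : ℕ} (e : J k r ≃ Fin m) (p : Pr (k + 1)) :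
    aeval (gphi e) (∑ a, monomial (bx p a) (cf a)) = r2 (k + 1) m p.1.1 p.1.2 := by
  have hmon : ∀ a : J k r, (monomial (bx p a) (cf a) : MvPolynomial (Fin (k + 1) × J k r) ℂ) =
      C (cf a) * (X (p.1.1, a) * X (p.1.2, dual a)) := by
    intro a
    simp [bx, X, C_mul_monomial, monomial_mul]
  rw [r2, ← e.sum_comp, map_sum, Fintype.sum_sum_type, Fintype.sum_sum_type (α₁ := Fin k ⊕ Fin k),
    Fintype.sum_sum_type, Fintype.sum_sum_type (α₁ := Fin k)]
  simp only [hmon]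
  simp only [map_mul, aeval_X, algHom_C, algebraMap_eq, cf, dual, Sum.swap_inl,
    Sum.swap_inr, gphi]
  congr 1
  · rw [← Finset.sum_add_distrib, ← Finset.sum_add_distrib]
    refine Finset.sum_congr rfl fun s _ => ?_
    have h1 : (C (1 / 2) : MvPolynomial (Fin (k + 1) × Fin m) ℂ) * 2 = 1 := by
      rw [← map_ofNat C 2, ← C_mul]; norm_num
    have h2 : (C Complex.I : MvPolynomial (Fin (k + 1) × Fin m) ℂ) * C Complex.I = -1 := by
      rw [← C_mul, Complex.I_mul_I]; simp
    generalize (X (p.1.1, e (.inl (.inl s))) : MvPolynomial (Fin (k + 1) × Fin m) ℂ) = u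
    generalize (X (p.1.1, e (.inl (.inr s))) : MvPolynomial (Fin (k + 1) × Fin m) ℂ) = v
    generalize (X (p.1.2, e (.inl (.inl s))) : MvPolynomial (Fin (k + 1) × Fin m) ℂ) = u'
    generalize (X (p.1.2, e (.inl (.inr s))) : MvPolynomial (Fin (k + 1) × Fin m) ℂ) = v'
    linear_combination (u * u' + v * v') * h1 - (C (1 / 2) * 2 * v * v') * h2
  · simp

end Concrete

end FischerDec

/-- **Theorem A** (harmonic Fischer decomposition in the semistable range). If `m ≥ 2k - 1`,
then every polynomial `P` has a unique representation `P = Σ_n r^{2n} H_n` with each `H_n`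
a spherical harmonic (only finitely many nonzero). -/
theorem thmA (k m : ℕ) (hk : 0 < k) (hm : 0 < m) (h : m ≥ 2 * k - 1)
    (P : MvPolynomial (Fin k × Fin m) ℂ) :
    ∃! H : ({p : Fin k × Fin k // p.1 ≤ p.2} → ℕ) →₀ MvPolynomial (Fin k × Fin m) ℂ,
      (∀ n, IsSphericalHarmonic k m (H n)) ∧
        P = H.sum fun n Hn => r2pow k m n * Hn := by
  obtain ⟨k, rfl⟩ : ∃ k', k = k' + 1 := ⟨k - 1, by omega⟩
  obtain ⟨r, hr⟩ : ∃ r, m = k + k + (r + 1) := ⟨m - (2 * k + 1), by omega⟩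
  have e : FischerDec.J k r ≃ Fin m := Fintype.equivOfCardEq (by simp [hr])
  let q : FischerDec.Pr (k + 1) → MvPolynomial (Fin (k + 1) × Fin m) ℂ :=
    fun p => r2 (k + 1) m p.1.1 p.1.2
  let D : FischerDec.Pr (k + 1) → MvPolynomial (Fin (k + 1) × Fin m) ℂ →
      MvPolynomial (Fin (k + 1) × Fin m) ℂ := fun p => mixedLap (k + 1) m p.1.1 p.1.2
  have hD : ∀ i P Q, FischerDec.fis (q i * P) Q = FischerDec.fis P (D i Q) :=
    fun i P Q => FischerDec.r2_adj _ _ _ _ _ _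
  have hH : ∀ P, P ∈ FischerDec.Harm (k + 1) m ↔ ∀ i, D i P = 0 := fun P =>
    ⟨fun h p => h p.1.1 p.1.2 p.2, fun h i j hij => h ⟨(i, j), hij⟩⟩
  exact FischerDec.abstract_dec q (FischerDec.Harm (k + 1) m)
    (fun d hd P hP i j _ => FischerDec.mixedLap_zero _ _ _ _ _
      (FischerDec.RD_mono (by omega) hP))
    (FischerDec.fischer_split q (fun i => FischerDec.r2_mem _ _ _ _) D hD
      (fun i d P hP => FischerDec.mixedLap_mem _ _ _ _ _ _ hP) _ hH)
    ((Equiv.refl (Fin (k + 1))).prodCongr e.symm)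
    (fun p => FischerDec.bx p (FischerDec.ld (r := r) p))
    (fun p => FischerDec.bx_degree _ _)
    FischerDec.ld_disj
    (FischerDec.finrank_har (Finsupp.weight FischerDec.wt) (fun _ a => FischerDec.cf a)
      FischerDec.bx FischerDec.ld FischerDec.bx_degree FischerDec.weight_lt
      (fun p => by
        cases FischerDec.ld (r := r) p <;> simp [FischerDec.cf])
      (aeval (FischerDec.gphi e)) (FischerDec.gphi_surj e) q (FischerDec.gphi_q e) _
      (fun P hP hI => FischerDec.har_inf_ideal q D hD P ((hH P).1 hP) hI))
    P
end

section
/- Let m ≥ 2k-1. If (H_n) is a finitely supported family of spherical harmonics indexed by families n = (n_ij)_{1 ≤ i ≤ j ≤ k} of nonnegative integers and Σ_n r^{2n} H_n = 0, then H_n = 0 for every n. That is, in the semistable range the sum Σ_n r^{2n} ℋ in 𝒫 is direct (uniqueness part of Theorem A). -/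
open MvPolynomial

section Fischer
variable {σ : Type*}

noncomputable def finFact (a : σ →₀ ℕ) : ℕ := a.prod fun _ n => n.factorial

lemma finFact_pos (a : σ →₀ ℕ) : 0 < finFact a :=
  Finset.prod_pos fun _ _ => Nat.factorial_pos _

lemma finFact_add (a : σ →₀ ℕ) (x : σ) :
    finFact (a + Finsupp.single x 1) = (a x + 1) * finFact a := by
  classical
  unfold finFact
  have h1 : ∀ b : σ →₀ ℕ, b.support ⊆ insert x a.support →
      b.prod (fun _ n => n.factorial) = ∏ y ∈ insert x a.support, (b y).factorial := by
    intro b hb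
    exact Finsupp.prod_of_support_subset _ hb _ (by simp)
  rw [h1 a (Finset.subset_insert _ _), h1 (a + Finsupp.single x 1)]
  · rw [← Finset.mul_prod_erase _ _ (Finset.mem_insert_self x a.support),
      ← Finset.mul_prod_erase _ (fun y => (a y).factorial) (Finset.mem_insert_self x a.support)]
    rw [← mul_assoc]
    congr 1
    · simp [Nat.factorial_succ]
    · refine Finset.prod_congr rfl fun y hy => ?_
      have : y ≠ x := (Finset.mem_erase.1 hy).1
      simp [this.symm]
  · intro y hy
    by_cases h : y = x
    · simp [h]
    · simpa [Finsupp.single_apply, h, Ne.symm h] using hy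

noncomputable def fischer : MvPolynomial σ ℂ →ₗ[ℂ] MvPolynomial σ ℂ →ₗ[ℂ] ℂ :=
  (basisMonomials σ ℂ).constr ℂ (fun a => (finFact a : ℂ) • lcoeff ℂ a)

lemma fischer_monomial (a : σ →₀ ℕ) (c : ℂ) (Q : MvPolynomial σ ℂ) :
    fischer (monomial a c) Q = c * (finFact a * coeff a Q) := by
  have : monomial a c = c • basisMonomials σ ℂ a := by simp [smul_monomial]
  rw [this, map_smul, fischer, Module.Basis.constr_basis]
  simp

lemma fischer_X_mul (x : σ) (P Q : MvPolynomial σ ℂ) :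
    fischer (X x * P) Q = fischer P (pderiv x Q) := by
  induction P using MvPolynomial.induction_on' with
  | monomial a c =>
    rw [X, monomial_mul, fischer_monomial, fischer_monomial, add_comm, finFact_add, coeff_pderiv]
    push_cast
    ring
  | add p q hp hq => simp [mul_add, hp, hq]

lemma fischer_conj_eq_zero (P : MvPolynomial σ ℂ)
    (h : fischer P (map (starRingEnd ℂ) P) = 0) : P = 0 := by
  have h1 : fischer P (map (starRingEnd ℂ) P) =
      ((∑ a ∈ P.support, (finFact a : ℝ) * ‖coeff a P‖ ^ 2 : ℝ) : ℂ) := by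
    conv_lhs => enter [1]; rw [P.as_sum]
    rw [map_sum, LinearMap.sum_apply]
    push_cast
    refine Finset.sum_congr rfl fun a _ => ?_
    rw [fischer_monomial, coeff_map, ← Complex.mul_conj']
    ring
  rw [h1, Complex.ofReal_eq_zero, Finset.sum_eq_zero_iff_of_nonneg (fun _ _ => by positivity)] at h
  ext a
  by_contra hne
  have := h a (by simpa [mem_support_iff] using hne)
  have h2 := finFact_pos a
  simp at this hne
  rcases this with h3 | h3
  · omega
  · exact hne h3

end Fischer

lemma fischer_r2 (k m : ℕ) (i j : Fin k) (P Q : MvPolynomial (Fin k × Fin m) ℂ) :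
    fischer (P * r2 k m i j) Q = fischer P (mixedLap k m i j Q) := by
  unfold r2 mixedLap
  rw [Finset.mul_sum, map_sum, map_sum, LinearMap.sum_apply]
  refine Finset.sum_congr rfl fun s _ => ?_
  rw [show P * (X (i, s) * X (j, s)) = X (j, s) * (X (i, s) * P) by ring, fischer_X_mul,
    fischer_X_mul]

lemma harmonic_ideal (k m : ℕ) (H : MvPolynomial (Fin k × Fin m) ℂ)
    (hH : IsSphericalHarmonic k m H)
    (hI : H ∈ Ideal.span (Set.range
      fun p : {p : Fin k × Fin k // p.1 ≤ p.2} => r2 k m p.1.1 p.1.2)) : H = 0 := by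
  apply fischer_conj_eq_zero
  have hc : IsSphericalHarmonic k m (map (starRingEnd ℂ) H) := by
    intro i j hij
    have := congrArg (map (starRingEnd ℂ)) (hH i j hij)
    simpa [mixedLap, pderiv_map] using this
  obtain ⟨c, hcs⟩ := (Ideal.mem_span_range_iff_exists_fun).1 hI
  have : ∀ Q, IsSphericalHarmonic k m Q → fischer H Q = 0 := by
    intro Q hQ
    rw [← hcs, map_sum, LinearMap.sum_apply]
    refine Finset.sum_eq_zero fun p _ => ?_
    rw [fischer_r2, hQ _ _ p.2, map_zero]
  exact this _ hc

section Leading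
variable {σ : Type*} (w : σ → ℕ)

/-- Polynomials all of whose monomials have weight `< N`. -/
noncomputable def lowW (N : ℕ) : Submodule ℂ (MvPolynomial σ ℂ) where
  carrier := {P | ∀ c, coeff c P ≠ 0 → Finsupp.weight w c < N}
  zero_mem' := by intro c hc; simp at hc
  add_mem' := by
    intro P Q hP hQ c hc
    by_cases h : coeff c P = 0
    · exact hQ c (by simpa [h] using hc)
    · exact hP c h
  smul_mem' := by
    intro r P hP c hc
    exact hP c (by intro h; simp [h] at hc)

lemma mem_lowW {N : ℕ} {P : MvPolynomial σ ℂ} :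
    P ∈ lowW w N ↔ ∀ c, coeff c P ≠ 0 → Finsupp.weight w c < N := Iff.rfl

lemma lowW_mono {M N : ℕ} (h : M ≤ N) : lowW w M ≤ lowW w N :=
  fun _ hP c hc => (hP c hc).trans_le h

lemma lowW_mul {M N : ℕ} {P Q : MvPolynomial σ ℂ} (hP : P ∈ lowW w (M + 1)) (hQ : Q ∈ lowW w N) :
    P * Q ∈ lowW w (M + N) := by
  classical
  intro c hc
  rw [coeff_mul] at hc
  obtain ⟨⟨a, b⟩, hab, hne⟩ := Finset.exists_ne_zero_of_sum_ne_zero hc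
  have h1 := hP a (left_ne_zero_of_mul hne)
  have h2 := hQ b (right_ne_zero_of_mul hne)
  rw [← Finset.HasAntidiagonal.mem_antidiagonal.1 hab, map_add]
  dsimp only
  omega

lemma monomial_mem_lowW {a : σ →₀ ℕ} {N : ℕ} {r : ℂ} (h : Finsupp.weight w a < N) :
    monomial a r ∈ lowW w N := by
  classical
  intro c hc
  rw [coeff_monomial] at hc
  by_cases hac : a = c
  · rwa [← hac]
  · simp [hac] at hc

/-- `P` is `x^a` plus terms of strictly smaller weight. -/
def LeadW (P : MvPolynomial σ ℂ) (a : σ →₀ ℕ) : Prop :=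
  P - monomial a 1 ∈ lowW w (Finsupp.weight w a)

lemma LeadW.mul {P Q : MvPolynomial σ ℂ} {a b : σ →₀ ℕ} (hP : LeadW w P a) (hQ : LeadW w Q b) :
    LeadW w (P * Q) (a + b) := by
  unfold LeadW at *
  have h1 : P ∈ lowW w (Finsupp.weight w a + 1) := by
    have := add_mem (lowW_mono w (Nat.le_succ _) hP)
      (monomial_mem_lowW (r := 1) w (Nat.lt_succ_self (Finsupp.weight w a)))
    simpa using this
  have h2 := lowW_mul w h1 hQ
  have h3 := lowW_mul w
    (monomial_mem_lowW (r := 1) w (Nat.lt_succ_self (Finsupp.weight w b))) hP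
  have h4 : P * Q - monomial (a + b) 1 =
      P * (Q - monomial b 1) + monomial b 1 * (P - monomial a 1) := by
    have : (monomial (a + b) (1 : ℂ)) = monomial a 1 * monomial b 1 := by simp [monomial_mul]
    rw [this]; ring
  rw [h4, map_add]
  exact add_mem h2 (by rwa [add_comm])

lemma LeadW.one : LeadW w 1 0 := by
  unfold LeadW
  rw [show (monomial (0 : σ →₀ ℕ) (1 : ℂ)) = 1 from rfl, sub_self]
  exact zero_mem _

lemma LeadW.monomial (a : σ →₀ ℕ) : LeadW w (monomial a 1) a := by
  unfold LeadW
  rw [sub_self]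
  exact zero_mem _

lemma LeadW.pow {P : MvPolynomial σ ℂ} {a : σ →₀ ℕ} (hP : LeadW w P a) (n : ℕ) :
    LeadW w (P ^ n) (n • a) := by
  induction n with
  | zero => simpa using LeadW.one w
  | succ n ih => rw [pow_succ, succ_nsmul]; exact ih.mul w hP

lemma LeadW.prod {E : Type*} (s : Finset E) (Q : E → MvPolynomial σ ℂ) (μ : E → σ →₀ ℕ)
    (h : ∀ e, LeadW w (Q e) (μ e)) : LeadW w (∏ e ∈ s, Q e) (∑ e ∈ s, μ e) := by
  classical
  induction s using Finset.induction_on with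
  | empty => simpa using LeadW.one w
  | insert e s he ih => rw [Finset.prod_insert he, Finset.sum_insert he]; exact (h e).mul w ih

lemma sub_mem_lowW (T : MvPolynomial σ ℂ →ₗ[ℂ] MvPolynomial σ ℂ)
    (hT : ∀ a, LeadW w (T (MvPolynomial.monomial a 1)) a) (N : ℕ) (f : MvPolynomial σ ℂ)
    (hf : f ∈ lowW w (N + 1)) : T f - f ∈ lowW w N := by
  have : T f - f = ∑ a ∈ f.support, coeff a f •
      (T (MvPolynomial.monomial a 1) - MvPolynomial.monomial a 1) := by
    conv_lhs => rw [f.as_sum]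
    rw [map_sum, ← Finset.sum_sub_distrib]
    refine Finset.sum_congr rfl fun a _ => ?_
    rw [smul_sub, ← map_smul, smul_monomial, smul_eq_mul, mul_one]
  rw [this]
  refine sum_mem fun a ha => Submodule.smul_mem _ _ (lowW_mono w ?_ (hT a))
  exact Nat.lt_succ_iff.1 (hf a (mem_support_iff.1 ha))

lemma T_injective (T : MvPolynomial σ ℂ →ₗ[ℂ] MvPolynomial σ ℂ)
    (hT : ∀ a, LeadW w (T (MvPolynomial.monomial a 1)) a) : Function.Injective T := by
  rw [injective_iff_map_eq_zero]
  intro f hf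
  by_contra hne
  obtain ⟨a, ha, hmax⟩ := Finset.exists_max_image f.support (Finsupp.weight w)
    (support_nonempty.2 hne)
  have h := sub_mem_lowW w T hT (Finsupp.weight w a) f
    (fun c hc => Nat.lt_succ_of_le (hmax c (mem_support_iff.2 hc)))
  rw [hf] at h
  exact lt_irrefl _ (h a (by simpa using mem_support_iff.1 ha))

lemma T_surjective (T : MvPolynomial σ ℂ →ₗ[ℂ] MvPolynomial σ ℂ)
    (hT : ∀ a, LeadW w (T (MvPolynomial.monomial a 1)) a) : Function.Surjective T := by
  have key : ∀ N, ∀ f ∈ lowW w N, f ∈ LinearMap.range T := by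
    intro N
    induction N with
    | zero =>
      intro f hf
      have : f = 0 := by
        ext c
        by_contra hc
        exact absurd (hf c (by simpa using hc)) (Nat.not_lt_zero _)
      rw [this]; exact zero_mem _
    | succ N ih =>
      intro f hf
      have := ih _ (sub_mem_lowW w T hT N f hf)
      have h2 := sub_mem (LinearMap.mem_range_self T f) this
      simpa using h2
  intro f
  refine key (f.support.sup (Finsupp.weight w) + 1) f ?_
  intro c hc
  exact Nat.lt_succ_of_le (Finset.le_sup (f := Finsupp.weight w) (mem_support_iff.2 hc))

variable {E : Type*} [Fintype E] (μ : E → σ →₀ ℕ)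

lemma exists_nu (m : σ →₀ ℕ) (hm : m ≠ 0) :
    ∃ ν : (σ →₀ ℕ) → ℕ, ∀ a p, p ≤ ν a ↔ ∀ x ∈ m.support, p * m x ≤ a x := by
  refine ⟨fun a => m.support.inf' (Finsupp.support_nonempty_iff.2 hm) fun x => a x / m x, ?_⟩
  intro a p
  rw [Finset.le_inf'_iff]
  refine forall₂_congr fun x hx => ?_
  rw [Nat.le_div_iff_mul_le (Nat.pos_of_ne_zero (Finsupp.mem_support_iff.1 hx))]

lemma sum_mu_apply (hdisj : ∀ e e', e ≠ e' → Disjoint (μ e).support (μ e').support)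
    (n : E → ℕ) (e : E) (x : σ) (hx : x ∈ (μ e).support) :
    (∑ e', n e' • μ e') x = n e * μ e x := by
  rw [Finsupp.finsetSum_apply, Finset.sum_eq_single e]
  · simp
  · intro e' _ hne
    have := Finset.disjoint_left.1 (hdisj e e' hne.symm) hx
    simp [Finsupp.notMem_support_iff.1 this]
  · simp

lemma quasi_regular (hdisj : ∀ e e', e ≠ e' → Disjoint (μ e).support (μ e').support)
    (hne : ∀ e, μ e ≠ 0) (Q : E → MvPolynomial σ ℂ) (hQ : ∀ e, LeadW w (Q e) (μ e))
    (G : (E → ℕ) →₀ MvPolynomial σ ℂ)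
    (hs : (G.sum fun n g => (∏ e, Q e ^ n e) * g) = 0)
    (n : E → ℕ) (hmin : ∀ n' < n, G n' = 0) : G n ∈ Ideal.span (Set.range Q) := by
  classical
  choose ν hν using fun e => exists_nu (μ e) (hne e)
  let S : (E → ℕ) → (σ →₀ ℕ) := fun n => ∑ e, n e • μ e
  have hSx : ∀ n e x, x ∈ (μ e).support → S n x = n e * μ e x :=
    fun n e x hx => sum_mu_apply μ hdisj n e x hx
  have hνadd : ∀ a n e, ν e (a + S n) = ν e a + n e := by
    intro a n e
    refine eq_of_forall_le_iff fun p => ?_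
    rw [hν]
    constructor
    · intro hp
      rcases le_total p (n e) with hpn | hpn
      · omega
      · obtain ⟨q, rfl⟩ := Nat.exists_eq_add_of_le hpn
        have : q ≤ ν e a := by
          rw [hν]
          intro x hx
          have := hp x hx
          rw [Finsupp.add_apply, hSx n e x hx, add_mul] at this
          omega
        omega
    · intro hp x hx
      have h1 := (hν e a (ν e a)).1 le_rfl x hx
      rw [Finsupp.add_apply, hSx n e x hx]
      calc p * μ e x ≤ (ν e a + n e) * μ e x := Nat.mul_le_mul_right _ hp
        _ ≤ _ := by rw [add_mul]; omega
  have hSle : ∀ a, S (fun e => ν e a) ≤ a := by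
    intro a x
    by_cases hx : ∃ e, x ∈ (μ e).support
    · obtain ⟨e, hx⟩ := hx
      rw [hSx _ e x hx]
      exact (hν e a (ν e a)).1 le_rfl x hx
    · push Not at hx
      have : S (fun e => ν e a) x = 0 := by
        simp only [S, Finsupp.finsetSum_apply]
        refine Finset.sum_eq_zero fun e _ => ?_
        simp [Finsupp.notMem_support_iff.1 (hx e)]
      omega
  let Qp : (E → ℕ) → MvPolynomial σ ℂ := fun n => ∏ e, Q e ^ n e
  let T : MvPolynomial σ ℂ →ₗ[ℂ] MvPolynomial σ ℂ := (basisMonomials σ ℂ).constr ℂ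
    (fun a => Qp (fun e => ν e a) * monomial (a - S (fun e => ν e a)) 1)
  have hTm : ∀ a, T (monomial a 1) =
      Qp (fun e => ν e a) * monomial (a - S (fun e => ν e a)) 1 := by
    intro a
    have : monomial a (1 : ℂ) = basisMonomials σ ℂ a := by simp
    rw [this]
    exact Module.Basis.constr_basis _ _ _ _
  have hT : ∀ a, LeadW w (T (monomial a 1)) a := by
    intro a
    rw [hTm]
    have h1 : LeadW w (Qp (fun e => ν e a)) (S (fun e => ν e a)) :=
      LeadW.prod w _ _ _ fun e => (hQ e).pow w _
    have := h1.mul w (LeadW.monomial w (a - S (fun e => ν e a)))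
    rwa [add_tsub_cancel_of_le (hSle a)] at this
  have hTmul : ∀ n f, T (monomial (S n) 1 * f) = Qp n * T f := by
    intro n f
    induction f using MvPolynomial.induction_on' with
    | add p q hp hq => rw [mul_add, map_add, map_add, hp, hq, mul_add]
    | monomial a c =>
      have h1 : monomial (S n) 1 * monomial a c = c • monomial (a + S n) (1 : ℂ) := by
        rw [monomial_mul, smul_monomial, add_comm]; simp
      have h2 : monomial a c = c • monomial a (1 : ℂ) := by
        rw [smul_monomial]; simp
      rw [h1, h2, map_smul, map_smul, hTm, hTm, mul_smul_comm]
      congr 1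
      have h3 : S (fun e => ν e (a + S n)) = S (fun e => ν e a) + S n := by
        simp only [hνadd]
        simp only [S, add_smul, Finset.sum_add_distrib]
      have h4 : Qp (fun e => ν e (a + S n)) = Qp n * Qp (fun e => ν e a) := by
        simp only [hνadd]
        simp only [Qp, pow_add, Finset.prod_mul_distrib]
        ring
      rw [h3, h4, add_tsub_add_eq_tsub_right, mul_assoc]
  have hinj := T_injective w T hT
  choose g hg using fun n => T_surjective w T hT (G n)
  have hg0 : ∀ n, G n = 0 → g n = 0 := by
    intro n hn
    apply hinj
    rw [hg, hn, map_zero]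
  have hsum : ∑ n ∈ G.support, monomial (S n) 1 * g n = 0 := by
    apply hinj
    rw [map_sum, map_zero]
    rw [← hs]
    refine Finset.sum_congr rfl fun n _ => ?_
    rw [hTmul, hg]
  have hcoef : ∀ b, (∀ e, ν e b = 0) → coeff b (g n) = 0 := by
    intro b hb
    by_cases hn : n ∈ G.support
    · have h1 := congrArg (coeff (b + S n)) hsum
      rw [coeff_sum, coeff_zero, Finset.sum_eq_single n] at h1
      · rw [add_comm, coeff_monomial_mul] at h1
        simpa using h1
      · intro n' _ hne'
        rw [coeff_monomial_mul']
        split_ifs with hle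
        · have : n' ≤ n := by
            intro e
            have h2 : n' e ≤ ν e (b + S n) := by
              rw [hν]
              intro x hx
              rw [← hSx n' e x hx]
              exact hle x
            rw [hνadd, hb] at h2
            simpa using h2
          rw [hg0 n' (hmin n' (lt_of_le_of_ne this hne'))]
          simp
        · rfl
      · exact fun h => absurd hn h
    · rw [hg0 n (by simpa using hn)]; simp
  rw [← hg n]
  rw [(g n).as_sum]
  rw [map_sum]
  refine sum_mem fun a ha => ?_
  have h2 : monomial a (coeff a (g n)) = coeff a (g n) • monomial a (1 : ℂ) := by
    rw [smul_monomial]; simp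
  rw [h2, map_smul, hTm]
  have : ∃ e, ν e a ≠ 0 := by
    by_contra hcon
    push Not at hcon
    exact mem_support_iff.1 ha (hcoef a hcon)
  obtain ⟨e, he⟩ := this
  rw [smul_eq_C_mul]
  refine Ideal.mul_mem_left _ _ (Ideal.mul_mem_right _ _ ?_)
  refine Ideal.mem_of_dvd _ ?_ (Ideal.subset_span ⟨e, rfl⟩)
  exact (dvd_pow_self _ he).trans
    (Finset.dvd_prod_of_mem (fun e => Q e ^ ν e a) (Finset.mem_univ e))

end Leading

section Split
variable (k e : ℕ)

/-- Split coordinates: `k - 1` hyperbolic pairs and `e + 1` further coordinates. -/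
abbrev SplitIdx : Type := Fin (k - 1) ⊕ Fin (k - 1) ⊕ Fin (e + 1)

/-- The pairs `i ≤ j`. -/
abbrev PairIdx : Type := {p : Fin k × Fin k // p.1 ≤ p.2}

variable {k e}

/-- The form in split coordinates. -/
noncomputable def splitQ (i j : Fin k) : MvPolynomial (Fin k × SplitIdx k e) ℂ :=
  (∑ t : Fin (k - 1), X (i, Sum.inl t) * X (j, Sum.inr (Sum.inl t))) +
  (∑ t : Fin (k - 1), X (i, Sum.inr (Sum.inl t)) * X (j, Sum.inl t)) +
  ∑ t : Fin (e + 1), X (i, Sum.inr (Sum.inr t)) * X (j, Sum.inr (Sum.inr t))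

/-- Integer weights. -/
def wz : Fin k × SplitIdx k e → ℤ
  | (i, Sum.inl t) => 5 * (k : ℤ) ^ 2 + 1 - ((t : ℤ) + 1) ^ 2 - 4 * ((t : ℤ) + 1) * i
  | (i, Sum.inr (Sum.inl t)) => 5 * (k : ℤ) ^ 2 + 1 - ((t : ℤ) + 1) ^ 2 + 4 * ((t : ℤ) + 1) * i
  | (_, Sum.inr (Sum.inr t)) => if t = 0 then 5 * (k : ℤ) ^ 2 + 1 else 5 * (k : ℤ) ^ 2

lemma wz_nonneg (x : Fin k × SplitIdx k e) : 0 ≤ wz x := by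
  rcases x with ⟨i, t | t | t⟩
  · have h1 : ((t : ℕ) : ℤ) + 1 ≤ k := by have := t.2; omega
    have h2 : ((i : ℕ) : ℤ) ≤ k := by have := i.2; omega
    have h3 : (0 : ℤ) ≤ (t : ℕ) := by positivity
    have h4 : (0 : ℤ) ≤ (i : ℕ) := by positivity
    simp only [wz]
    nlinarith [mul_le_mul h1 h2 h4 (by omega), mul_le_mul h1 h1 (by omega) (by omega)]
  · have h1 : ((t : ℕ) : ℤ) + 1 ≤ k := by have := t.2; omega
    have h3 : (0 : ℤ) ≤ (t : ℕ) := by positivity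
    have h4 : (0 : ℤ) ≤ (i : ℕ) := by positivity
    simp only [wz]
    nlinarith [mul_nonneg h3 h4, mul_le_mul h1 h1 (by omega) (by omega)]
  · simp only [wz]
    split_ifs <;> positivity

/-- Natural number weights. -/
def wn (x : Fin k × SplitIdx k e) : ℕ := (wz x).toNat

lemma wn_cast (x : Fin k × SplitIdx k e) : (wn x : ℤ) = wz x := Int.toNat_of_nonneg (wz_nonneg x)

/-- First variable of the leading monomial. -/
def leadX (p : PairIdx k) : Fin k × SplitIdx k e :=
  (p.1.1, if h : p.1.1 < p.1.2 then
    Sum.inl ⟨p.1.2 - p.1.1 - 1, by have := p.1.2.2; have : p.1.1.1 < p.1.2.1 := h; omega⟩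
    else Sum.inr (Sum.inr 0))

/-- Second variable of the leading monomial. -/
def leadY (p : PairIdx k) : Fin k × SplitIdx k e :=
  (p.1.2, if h : p.1.1 < p.1.2 then
    Sum.inr (Sum.inl ⟨p.1.2 - p.1.1 - 1, by
      have := p.1.2.2; have : p.1.1.1 < p.1.2.1 := h; omega⟩)
    else Sum.inr (Sum.inr 0))

/-- The leading monomial. -/
noncomputable def leadMu (p : PairIdx k) : (Fin k × SplitIdx k e) →₀ ℕ :=
  Finsupp.single (leadX p) 1 + Finsupp.single (leadY p) 1

lemma leadMu_ne (p : PairIdx k) : leadMu (e := e) p ≠ 0 := by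
  intro h
  have := DFunLike.congr_fun h (leadX p)
  simp [leadMu] at this

lemma lead_inj (p q : PairIdx k) (h : (leadX (e := e) p = leadX q ∨ leadX (e := e) p = leadY q) ∨
    (leadY (e := e) p = leadX q ∨ leadY (e := e) p = leadY q)) : p = q := by
  obtain ⟨⟨i, j⟩, hij⟩ := p
  obtain ⟨⟨i', j'⟩, hij'⟩ := q
  simp only [leadX, leadY, Prod.mk.injEq] at h
  simp only [Fin.le_def] at hij hij'
  simp only [Subtype.mk.injEq, Prod.mk.injEq, Fin.ext_iff]
  by_cases h1 : i < j <;> by_cases h2 : i' < j' <;>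
    simp [h1, h2, Fin.ext_iff] at h <;> simp only [Fin.lt_def] at h1 h2 <;> omega

lemma leadMu_disj (p q : PairIdx k) (hpq : p ≠ q) :
    Disjoint (leadMu (e := e) p).support (leadMu (e := e) q).support := by
  have hs : ∀ (p : PairIdx k) x, x ∈ (leadMu (e := e) p).support → x = leadX p ∨ x = leadY p := by
    intro p x hx
    by_contra hcon
    push Not at hcon
    simp [leadMu, hcon.1.symm, hcon.2.symm] at hx
  rw [Finset.disjoint_left]
  intro x hx hx'
  apply hpq
  apply lead_inj (e := e)
  rcases hs p x hx with h | h <;> rcases hs q x hx' with h' | h' <;> simp [← h, ← h']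

lemma XX_mem {N : ℕ} {a b : Fin k × SplitIdx k e} (h : wz a + wz b < N) :
    (X a * X b : MvPolynomial (Fin k × SplitIdx k e) ℂ) ∈ lowW wn N := by
  rw [X, X, monomial_mul]
  apply monomial_mem_lowW
  rw [map_add, Finsupp.weight_single, Finsupp.weight_single, one_smul, one_smul]
  rw [← wn_cast, ← wn_cast] at h
  exact_mod_cast h

lemma lead_splitQ (p : PairIdx k) : LeadW wn (splitQ (e := e) p.1.1 p.1.2) (leadMu p) := by
  obtain ⟨⟨i, j⟩, hij⟩ := p
  have hmon : ∀ p : PairIdx k, monomial (leadMu (e := e) p) (1 : ℂ) = X (leadX p) * X (leadY p) := by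
    intro p
    rw [X, X, monomial_mul, leadMu, one_mul]
  have hN : ∀ p : PairIdx k,
      ((Finsupp.weight wn (leadMu (e := e) p) : ℕ) : ℤ) =
        wz (leadX (e := e) p) + wz (leadY (e := e) p) := by
    intro p
    rw [leadMu, map_add, Finsupp.weight_single, Finsupp.weight_single, one_smul, one_smul]
    push_cast
    rw [wn_cast, wn_cast]
  unfold LeadW
  rw [hmon]
  dsimp only [splitQ]
  by_cases h : i < j
  · have hij' : (i : ℕ) < j := h
    let s : Fin (k - 1) := ⟨j - i - 1, by have := j.2; omega⟩
    have hx : leadX (e := e) ⟨(i, j), hij⟩ = (i, Sum.inl s) := by simp [leadX, h, s]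
    have hy : leadY (e := e) ⟨(i, j), hij⟩ = (j, Sum.inr (Sum.inl s)) := by simp [leadY, h, s]
    have hsv : ((s : ℕ) : ℤ) = (j : ℕ) - (i : ℕ) - 1 := by simp only [s]; omega
    have hNv := hN ⟨(i, j), hij⟩
    rw [hx, hy]
    rw [hx, hy] at hNv
    have hNv' : ((Finsupp.weight wn (leadMu (e := e) ⟨(i, j), hij⟩) : ℕ) : ℤ) =
        2 * (5 * (k : ℤ) ^ 2 + 1) + 2 * ((j : ℕ) - (i : ℕ) : ℤ) ^ 2 := by
      rw [hNv]; simp only [wz]; rw [hsv]; ring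
    have hd : (0 : ℤ) < (j : ℕ) - (i : ℕ) := by omega
    rw [← Finset.add_sum_erase Finset.univ _ (Finset.mem_univ s)]
    rw [show ∀ a b c d : MvPolynomial (Fin k × SplitIdx k e) ℂ, a + b + c + d - a = b + c + d by
      intros; ring]
    refine add_mem (add_mem (sum_mem fun t ht => ?_) (sum_mem fun t _ => ?_))
      (sum_mem fun t _ => ?_)
    · apply XX_mem
      rw [hNv']
      simp only [wz]
      have hts : (t : ℕ) ≠ s := fun hh => (Finset.mem_erase.1 ht).1 (Fin.ext hh)
      have : ((t : ℕ) : ℤ) + 1 - ((j : ℕ) - (i : ℕ)) ≠ 0 := by omega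
      have := pow_pos (abs_pos.2 this) 2
      rw [sq_abs] at this
      nlinarith
    · apply XX_mem
      rw [hNv']
      simp only [wz]
      have h3 : (0 : ℤ) ≤ (t : ℕ) := by positivity
      nlinarith [mul_nonneg h3 hd.le]
    · apply XX_mem
      rw [hNv']
      simp only [wz]
      split_ifs <;> nlinarith
  · have hij' : i = j := le_antisymm hij (not_lt.1 h)
    subst hij'
    have hx : leadX (e := e) ⟨(i, i), hij⟩ = (i, Sum.inr (Sum.inr 0)) := by simp [leadX]
    have hy : leadY (e := e) ⟨(i, i), hij⟩ = (i, Sum.inr (Sum.inr 0)) := by simp [leadY]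
    have hNv := hN ⟨(i, i), hij⟩
    rw [hx, hy]
    rw [hx, hy] at hNv
    have hNv' : ((Finsupp.weight wn (leadMu (e := e) ⟨(i, i), hij⟩) : ℕ) : ℤ) =
        2 * (5 * (k : ℤ) ^ 2 + 1) := by
      rw [hNv]; simp only [wz]; simp; ring
    rw [← Finset.add_sum_erase (Finset.univ : Finset (Fin (e + 1))) _ (Finset.mem_univ 0)]
    rw [show ∀ a b c d : MvPolynomial (Fin k × SplitIdx k e) ℂ, a + b + (c + d) - c = a + b + d by
      intros; ring]
    refine add_mem (add_mem (sum_mem fun t ht => ?_) (sum_mem fun t _ => ?_))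
      (sum_mem fun t ht => ?_)
    · apply XX_mem
      rw [hNv']
      simp only [wz]
      have h3 : (0 : ℤ) ≤ (t : ℕ) := by positivity
      nlinarith
    · apply XX_mem
      rw [hNv']
      simp only [wz]
      have h3 : (0 : ℤ) ≤ (t : ℕ) := by positivity
      nlinarith
    · apply XX_mem
      rw [hNv']
      simp only [wz]
      rw [if_neg (Finset.mem_erase.1 ht).1]
      linarith

/-- Linear forms substituted for the original coordinates. -/
noncomputable def fwdL (i : Fin k) : SplitIdx k e → MvPolynomial (Fin k × SplitIdx k e) ℂ
  | Sum.inl t => X (i, Sum.inl t) + C (1 / 2) * X (i, Sum.inr (Sum.inl t))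
  | Sum.inr (Sum.inl t) =>
      C Complex.I * (X (i, Sum.inl t) - C (1 / 2) * X (i, Sum.inr (Sum.inl t)))
  | Sum.inr (Sum.inr t) => X (i, Sum.inr (Sum.inr t))

/-- The inverse substitution. -/
noncomputable def bwdL {m : ℕ} (ε : Fin m ≃ SplitIdx k e) (i : Fin k) :
    SplitIdx k e → MvPolynomial (Fin k × Fin m) ℂ
  | Sum.inl t => C (1 / 2) * (X (i, ε.symm (Sum.inl t)) -
      C Complex.I * X (i, ε.symm (Sum.inr (Sum.inl t))))
  | Sum.inr (Sum.inl t) => X (i, ε.symm (Sum.inl t)) +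
      C Complex.I * X (i, ε.symm (Sum.inr (Sum.inl t)))
  | Sum.inr (Sum.inr t) => X (i, ε.symm (Sum.inr (Sum.inr t)))

lemma C_I_sq {τ : Type*} : (C Complex.I * C Complex.I : MvPolynomial τ ℂ) = -1 := by
  rw [← C_mul, Complex.I_mul_I]; simp

lemma C_half {τ : Type*} : (C (1 / 2) * 2 : MvPolynomial τ ℂ) = 1 := by
  rw [show (2 : MvPolynomial τ ℂ) = C 2 from (map_ofNat C 2).symm, ← C_mul]; norm_num

noncomputable def fwd {m : ℕ} (ε : Fin m ≃ SplitIdx k e) :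
    MvPolynomial (Fin k × Fin m) ℂ →ₐ[ℂ] MvPolynomial (Fin k × SplitIdx k e) ℂ :=
  aeval fun x => fwdL x.1 (ε x.2)

noncomputable def bwd {m : ℕ} (ε : Fin m ≃ SplitIdx k e) :
    MvPolynomial (Fin k × SplitIdx k e) ℂ →ₐ[ℂ] MvPolynomial (Fin k × Fin m) ℂ :=
  aeval fun x => bwdL ε x.1 x.2

lemma bwd_fwd {m : ℕ} (ε : Fin m ≃ SplitIdx k e) (P : MvPolynomial (Fin k × Fin m) ℂ) :
    bwd ε (fwd ε P) = P := by
  have : (bwd ε).comp (fwd ε) = AlgHom.id ℂ _ := by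
    apply MvPolynomial.algHom_ext
    rintro ⟨i, s⟩
    obtain ⟨s, rfl⟩ := ε.symm.surjective s
    have hC : ∀ c, bwd ε (C c) = C c := fun c => by simp [bwd]
    have hX : ∀ x, bwd ε (X x) = bwdL ε x.1 x.2 := fun x => by simp [bwd]
    have hF : ∀ x, fwd ε (X x) = fwdL x.1 (ε x.2) := fun x => by simp [fwd]
    rw [AlgHom.comp_apply, hF, AlgHom.id_apply]
    simp only [Equiv.apply_symm_apply]
    have hI := C_I_sq (τ := Fin k × Fin m)
    have hh := C_half (τ := Fin k × Fin m)
    rcases s with t | t | t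
    · simp only [fwdL, map_add, map_mul, hC, hX, bwdL]
      linear_combination (X (i, ε.symm (Sum.inl t))) * hh
    · simp only [fwdL, map_sub, map_mul, hC, hX, bwdL]
      linear_combination (-(C (1/2) * 2 * X (i, ε.symm (Sum.inr (Sum.inl t))))) * hI +
        (X (i, ε.symm (Sum.inr (Sum.inl t)))) * hh
    · simp only [fwdL, hX, bwdL]
  exact DFunLike.congr_fun this P

lemma split_identity {R : Type*} [CommRing R] (a b a' b' c h : R) (hc : c * c = -1)
    (hh : h * 2 = 1) :
    (a + h * b) * (a' + h * b') + c * (a - h * b) * (c * (a' - h * b')) = a * b' + b * a' := by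
  linear_combination (a - h * b) * (a' - h * b') * hc + (a * b' + b * a') * hh

lemma fwd_r2 {m : ℕ} (ε : Fin m ≃ SplitIdx k e) (i j : Fin k) :
    fwd ε (r2 k m i j) = splitQ i j := by
  have hF : ∀ x, fwd ε (X x) = fwdL x.1 (ε x.2) := fun x => by simp [fwd]
  have hI := C_I_sq (τ := Fin k × SplitIdx k e)
  have hh := C_half (τ := Fin k × SplitIdx k e)
  unfold r2 splitQ
  simp only [map_sum, map_mul, hF]
  rw [Equiv.sum_comp ε (fun s => fwdL i s * fwdL j s), Fintype.sum_sum_type,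
    Fintype.sum_sum_type, ← add_assoc, ← Finset.sum_add_distrib, ← Finset.sum_add_distrib]
  have h1 : ∀ t : Fin (k - 1), fwdL (e := e) i (Sum.inl t) * fwdL j (Sum.inl t) +
      fwdL i (Sum.inr (Sum.inl t)) * fwdL j (Sum.inr (Sum.inl t)) =
      X (i, Sum.inl t) * X (j, Sum.inr (Sum.inl t)) +
        X (i, Sum.inr (Sum.inl t)) * X (j, Sum.inl t) :=
    fun t => split_identity _ _ _ _ _ _ hI hh
  simp only [h1]
  rfl

end Split

/-- Uniqueness part of Theorem A: in the semistable range `m ≥ 2k - 1`, if a finitely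
supported family of spherical harmonics satisfies `Σ_n r^{2n} H_n = 0`, then all `H_n = 0`;
i.e. the sum `Σ_n r^{2n} ℋ` is direct. -/
theorem thmA_uniqueness (k m : ℕ) (hk : 0 < k) (hm : 0 < m) (h : m ≥ 2 * k - 1)
    (H : ({p : Fin k × Fin k // p.1 ≤ p.2} → ℕ) →₀ MvPolynomial (Fin k × Fin m) ℂ)
    (harm : ∀ n, IsSphericalHarmonic k m (H n))
    (hsum : (H.sum fun n Hn => r2pow k m n * Hn) = 0) :
    ∀ n, H n = 0 := by
  have hcard : Fintype.card (Fin m) = Fintype.card (SplitIdx k (m - (2 * k - 1))) := by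
    simp only [Fintype.card_sum, Fintype.card_fin]
    omega
  have ε := Fintype.equivOfCardEq hcard
  have hs' : ((H.mapRange (fwd ε) (map_zero _)).sum fun n g =>
      (∏ p : PairIdx k, splitQ p.1.1 p.1.2 ^ n p) * g) = 0 := by
    rw [Finsupp.sum_mapRange_index (by simp)]
    have h1 := congrArg (fwd ε) hsum
    rw [map_zero, Finsupp.sum, map_sum] at h1
    rw [← h1]
    refine Finset.sum_congr rfl fun n _ => ?_
    simp only [map_mul, r2pow, map_prod, map_pow, fwd_r2]
  have key : ∀ n, (∀ n' < n, H n' = 0) → H n = 0 := by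
    intro n hn
    apply harmonic_ideal k m _ (harm n)
    have h1 := quasi_regular wn leadMu leadMu_disj leadMu_ne
      (fun p : PairIdx k => splitQ p.1.1 p.1.2) lead_splitQ _ hs' n
      (fun n' hn' => by simp [hn n' hn'])
    have h2 := Ideal.mem_map_of_mem (bwd ε) h1
    rw [Finsupp.mapRange_apply, bwd_fwd, Ideal.map_span, ← Set.range_comp] at h2
    convert h2 using 3
    funext p
    rw [Function.comp_apply, ← fwd_r2 ε, bwd_fwd]
  intro n
  induction n using WellFoundedLT.induction with
  | ind n ih => exact key n ih
end

section
/- Classical Fischer decomposition in one vector variable: for every positive integer m, each complex polynomial P in the variables x_1, …, x_m has a unique representation as a finite sum P = H_0 + r² H_1 + r⁴ H_2 + ⋯ + r^{2j} H_j + ⋯, where r² = x_1² + ⋯ + x_m² and each H_j is a harmonic polynomial (Δ H_j = 0 for the Laplacian Δ = ∂_{x_1}² + ⋯ + ∂_{x_m}²). -/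
open MvPolynomial

/-- The Laplacian `Δ = Σ_s ∂_{x_s}²` on complex polynomials in `x_1, …, x_m`. -/
noncomputable def laplacian (m : ℕ) (P : MvPolynomial (Fin m) ℂ) : MvPolynomial (Fin m) ℂ :=
  ∑ s : Fin m, pderiv s (pderiv s P)

/-- The polynomial `r² = x_1² + ⋯ + x_m²`. -/
noncomputable def rSq (m : ℕ) : MvPolynomial (Fin m) ℂ :=
  ∑ s : Fin m, X s * X s

/-- The weight `α!`. -/
noncomputable def fischerWeight (m : ℕ) (α : Fin m →₀ ℕ) : ℂ := ∏ s, ((α s).factorial : ℂ)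

/-- The bilinear Fischer form. -/
noncomputable def fischerForm (m : ℕ) :
    MvPolynomial (Fin m) ℂ →ₗ[ℂ] MvPolynomial (Fin m) ℂ →ₗ[ℂ] ℂ :=
  ((basisMonomials (Fin m) ℂ).constr ℂ).toLinearMap ∘ₗ
    LinearMap.pi fun α => fischerWeight m α • lcoeff ℂ α

lemma fischerForm_monomial (m : ℕ) (Q : MvPolynomial (Fin m) ℂ) (α : Fin m →₀ ℕ) (c : ℂ) :
    fischerForm m Q (monomial α c) = c * (fischerWeight m α * coeff α Q) := by
  have h : (monomial α c : MvPolynomial (Fin m) ℂ) = c • basisMonomials (Fin m) ℂ α := by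
    simp [smul_monomial]
  rw [h, map_smul]
  simp only [fischerForm, LinearMap.comp_apply, LinearEquiv.coe_coe, Module.Basis.constr_basis]
  simp

lemma fischerWeight_add (m : ℕ) (α : Fin m →₀ ℕ) (s : Fin m) :
    fischerWeight m (α + Finsupp.single s 1) = (α s + 1) * fischerWeight m α := by
  unfold fischerWeight
  rw [← Finset.mul_prod_erase _ _ (Finset.mem_univ s), ← Finset.mul_prod_erase _ (fun t => ((α t).factorial : ℂ)) (Finset.mem_univ s), ← mul_assoc]
  congr 1
  · simp [Nat.factorial_succ]
  · refine Finset.prod_congr rfl fun t ht => ?_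
    have : s ≠ t := (Finset.ne_of_mem_erase ht).symm
    simp [this]

lemma fischerForm_X_mul (m : ℕ) (Q P : MvPolynomial (Fin m) ℂ) (s : Fin m) :
    fischerForm m Q (X s * P) = fischerForm m (pderiv s Q) P := by
  induction P using MvPolynomial.induction_on' with
  | monomial α c =>
    rw [mul_comm, X, monomial_mul, fischerForm_monomial, fischerForm_monomial, coeff_pderiv,
      fischerWeight_add]
    ring
  | add p q hp hq => rw [mul_add, map_add, map_add, hp, hq]

lemma fischerForm_rSq_mul (m : ℕ) (Q P : MvPolynomial (Fin m) ℂ) :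
    fischerForm m Q (rSq m * P) = fischerForm m (laplacian m Q) P := by
  simp only [rSq, laplacian, Finset.sum_mul, map_sum, mul_assoc, fischerForm_X_mul,
    LinearMap.sum_apply]

lemma fischerForm_conj_pos (m : ℕ) (P : MvPolynomial (Fin m) ℂ)
    (h : fischerForm m P (MvPolynomial.map (starRingEnd ℂ) P) = 0) : P = 0 := by
  have e : fischerForm m P (MvPolynomial.map (starRingEnd ℂ) P) =
      ((∑ α ∈ P.support, (∏ s, ((α s).factorial : ℝ)) * Complex.normSq (coeff α P) : ℝ) : ℂ) := by
    conv_lhs => rw [P.as_sum]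
    conv_lhs => enter [2]; rw [map_sum, ]
    conv_lhs => rw [← P.as_sum, map_sum]
    push_cast
    refine Finset.sum_congr rfl fun α _ => ?_
    rw [map_monomial, fischerForm_monomial, Complex.normSq_eq_conj_mul_self, fischerWeight]
    ring
  rw [e, Complex.ofReal_eq_zero, Finset.sum_eq_zero_iff_of_nonneg] at h
  · ext α
    by_contra hα
    have hα' : coeff α P ≠ 0 := by simpa using hα
    have h1 := h α (mem_support_iff.2 hα')
    have h2 : (∏ s, ((α s).factorial : ℝ)) ≠ 0 :=
      Finset.prod_ne_zero_iff.2 fun s _ => by exact_mod_cast Nat.factorial_ne_zero _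
    rcases mul_eq_zero.1 h1 with h3 | h3
    · exact h2 h3
    · exact hα' (Complex.normSq_eq_zero.1 h3)
  · intro α _
    exact mul_nonneg (Finset.prod_nonneg fun s _ => Nat.cast_nonneg _) (Complex.normSq_nonneg _)

lemma rSq_ne_zero (m : ℕ) (hm : 0 < m) : rSq m ≠ 0 := by
  intro h
  have := congrArg (eval fun _ => (1 : ℂ)) h
  simp [rSq] at this
  omega

lemma laplacian_rSq_inj (m : ℕ) (hm : 0 < m) (Q : MvPolynomial (Fin m) ℂ)
    (h : laplacian m (rSq m * Q) = 0) : Q = 0 := by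
  have h1 : rSq m * Q = 0 := by
    apply fischerForm_conj_pos
    have : MvPolynomial.map (starRingEnd ℂ) (rSq m) = rSq m := by simp [rSq]
    rw [map_mul (MvPolynomial.map (starRingEnd ℂ)), this, fischerForm_rSq_mul, h]
    simp
  exact (mul_eq_zero.1 h1).resolve_left (rSq_ne_zero m hm)

lemma totalDegree_pderiv_le' (m : ℕ) (P : MvPolynomial (Fin m) ℂ) (s : Fin m) :
    (pderiv s P).totalDegree ≤ P.totalDegree - 1 := by
  refine Finset.sup_le fun α hα => ?_
  rw [mem_support_iff, coeff_pderiv] at hα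
  have := le_totalDegree (mem_support_iff.2 (left_ne_zero_of_mul hα))
  rw [Finsupp.sum_add_index' (fun _ => rfl) (fun _ _ _ => rfl), Finsupp.sum_single_index rfl] at this
  omega

lemma totalDegree_laplacian_le (m : ℕ) (P : MvPolynomial (Fin m) ℂ) :
    (laplacian m P).totalDegree ≤ P.totalDegree - 2 := by
  refine (totalDegree_finsetSum _ _).trans (Finset.sup_le fun s _ => ?_)
  have h1 := totalDegree_pderiv_le' m P s
  have h2 := totalDegree_pderiv_le' m (pderiv s P) s
  omega

lemma totalDegree_rSq_le (m : ℕ) : (rSq m).totalDegree ≤ 2 := by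
  refine (totalDegree_finsetSum _ _).trans (Finset.sup_le fun s _ => ?_)
  refine (totalDegree_mul _ _).trans ?_
  simp

/-- The operator `Δ ∘ r²`. -/
noncomputable def lapR (m : ℕ) : MvPolynomial (Fin m) ℂ →ₗ[ℂ] MvPolynomial (Fin m) ℂ where
  toFun Q := laplacian m (rSq m * Q)
  map_add' a b := by simp [laplacian, mul_add, Finset.sum_add_distrib, -Derivation.leibniz]
  map_smul' c a := by simp [laplacian, Finset.smul_sum, -Derivation.leibniz]

lemma lapR_surj (m : ℕ) (hm : 0 < m) (R : MvPolynomial (Fin m) ℂ) :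
    ∃ Q, laplacian m (rSq m * Q) = R ∧ Q.totalDegree ≤ R.totalDegree := by
  set n := R.totalDegree
  have hmap : ∀ Q ∈ restrictTotalDegree (Fin m) ℂ n, lapR m Q ∈ restrictTotalDegree (Fin m) ℂ n := by
    intro Q hQ
    rw [mem_restrictTotalDegree] at *
    have h1 := totalDegree_laplacian_le m (rSq m * Q)
    have h2 := totalDegree_mul (rSq m) Q
    have h3 := totalDegree_rSq_le m
    change (laplacian m (rSq m * Q)).totalDegree ≤ n
    omega
  have hinj : Function.Injective ((lapR m).restrict hmap) := by
    rw [← LinearMap.ker_eq_bot, LinearMap.ker_eq_bot']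
    intro Q hQ
    exact Subtype.ext (laplacian_rSq_inj m hm _ (congrArg Subtype.val hQ))
  obtain ⟨Q, hQ⟩ := LinearMap.injective_iff_surjective.1 hinj
    ⟨R, (mem_restrictTotalDegree _ _ _).2 le_rfl⟩
  exact ⟨Q, congrArg Subtype.val hQ, (mem_restrictTotalDegree _ _ _).1 Q.2⟩

lemma laplacian_sub (m : ℕ) (P Q : MvPolynomial (Fin m) ℂ) :
    laplacian m (P - Q) = laplacian m P - laplacian m Q := by
  simp [laplacian]

lemma fischer_exists (m : ℕ) (hm : 0 < m) (n : ℕ) : ∀ P : MvPolynomial (Fin m) ℂ,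
    P.totalDegree ≤ n → ∃ (N : ℕ) (H : ℕ → MvPolynomial (Fin m) ℂ),
      (∀ j, laplacian m (H j) = 0) ∧ (∀ j, N ≤ j → H j = 0) ∧
        P = ∑ j ∈ Finset.range N, (rSq m) ^ j * H j := by
  have lap0 : laplacian m 0 = 0 := by simp [laplacian]
  induction n with
  | zero =>
    intro P hP
    refine ⟨1, fun j => if j = 0 then P else 0, fun j => ?_, fun j hj => ?_, ?_⟩
    · rw [totalDegree_eq_zero_iff_eq_C.1 (Nat.le_zero.1 hP)]
      beta_reduce; split_ifs <;> simp [laplacian]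
    · simp; omega
    · simp
  | succ n ih =>
    intro P hP
    obtain ⟨Q, hQ, hd⟩ := lapR_surj m hm (laplacian m P)
    have h1 := totalDegree_laplacian_le m P
    obtain ⟨N, H, hH, hN, hs⟩ := ih Q (by omega)
    refine ⟨N + 1, fun j => Nat.casesOn j (P - rSq m * Q) H, fun j => ?_, fun j hj => ?_, ?_⟩
    · cases j with
      | zero => simp [laplacian_sub, hQ]
      | succ j => exact hH j
    · cases j with
      | zero => omega
      | succ j => exact hN j (by omega)
    · rw [Finset.sum_range_succ']
      simp only [pow_succ', mul_assoc, ← Finset.mul_sum, ← hs]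
      simp

lemma fischer_unique (m : ℕ) (hm : 0 < m) (N : ℕ) : ∀ H : ℕ → MvPolynomial (Fin m) ℂ,
    (∀ j, laplacian m (H j) = 0) → ∑ j ∈ Finset.range N, (rSq m) ^ j * H j = 0 →
      ∀ j < N, H j = 0 := by
  induction N with
  | zero => intro H _ _ j hj; omega
  | succ N ih =>
    intro H hH hs
    rw [Finset.sum_range_succ'] at hs
    simp only [pow_succ', mul_assoc, ← Finset.mul_sum, pow_zero, one_mul] at hs
    have h0 : rSq m * ∑ j ∈ Finset.range N, (rSq m) ^ j * H (j + 1) = 0 - H 0 := by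
      rw [← hs]; ring
    have hq := laplacian_rSq_inj m hm _ (by
      rw [h0, laplacian_sub, hH 0]; simp [laplacian])
    rw [hq] at hs
    intro j hj
    cases j with
    | zero => simpa using hs
    | succ j => exact ih (fun j => H (j + 1)) (fun j => hH _) hq j (by omega)

/-- Classical Fischer decomposition: every complex polynomial in `x_1, …, x_m` has a unique
representation `P = Σ_j r^{2j} H_j` as a finite sum with each `H_j` harmonic. -/
theorem classical_fischer (m : ℕ) (hm : 0 < m) (P : MvPolynomial (Fin m) ℂ) :
    ∃! H : ℕ →₀ MvPolynomial (Fin m) ℂ,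
      (∀ j, laplacian m (H j) = 0) ∧ P = H.sum fun j Hj => (rSq m) ^ j * Hj := by
  have key : ∀ (H : ℕ →₀ MvPolynomial (Fin m) ℂ) (N : ℕ), (∀ j, N ≤ j → H j = 0) →
      (H.sum fun j Hj => (rSq m) ^ j * Hj) = ∑ j ∈ Finset.range N, (rSq m) ^ j * H j := by
    intro H N hN
    refine Finsupp.sum_of_support_subset _ (fun j hj => ?_) _ (by simp)
    rw [Finset.mem_range]
    by_contra hc
    exact (Finsupp.mem_support_iff.1 hj) (hN j (by omega))
  obtain ⟨N, H, hH, hN, hs⟩ := fischer_exists m hm _ P le_rfl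
  let H' : ℕ →₀ MvPolynomial (Fin m) ℂ := Finsupp.onFinset (Finset.range N) H (by
    intro j hj
    rw [Finset.mem_range]
    by_contra hc
    exact hj (hN j (by omega)))
  refine ⟨H', ⟨hH, ?_⟩, ?_⟩
  · rw [key H' N hN]; exact hs
  · rintro G ⟨hG, hGs⟩
    obtain ⟨M, hM⟩ : ∃ M, ∀ j, M ≤ j → G j = 0 := by
      refine ⟨G.support.sup id + 1, fun j hj => ?_⟩
      by_contra hc
      have := Finset.le_sup (f := id) (Finsupp.mem_support_iff.2 hc)
      simp only [id] at this hj
      omega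
    have hD : ∀ j, max M N ≤ j → (G - H') j = 0 := fun j hj => by
      rw [Finsupp.sub_apply, hM j (le_trans (le_max_left _ _) hj)]
      have : H' j = 0 := hN j (le_trans (le_max_right _ _) hj)
      rw [this, sub_zero]
    have hz : ∑ j ∈ Finset.range (max M N), (rSq m) ^ j * (G - H') j = 0 := by
      simp only [Finsupp.sub_apply, mul_sub, Finset.sum_sub_distrib]
      rw [← key G _ (fun j hj => hM j (le_trans (le_max_left _ _) hj)), 
        ← key H' _ (fun j hj => hN j (le_trans (le_max_right _ _) hj)), ← hGs, key H' N hN]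
      rw [sub_eq_zero]; exact hs
    have hu := fischer_unique m hm _ (fun j => (G - H') j) (fun j => by
      have : laplacian m (H' j) = 0 := hH j
      simp only [Finsupp.sub_apply]
      rw [laplacian_sub, hG, this, sub_zero]) hz
    rw [← sub_eq_zero]
    ext1 j
    rcases lt_or_ge j (max M N) with hj | hj
    · exact hu j hj
    · exact hD j hj
end
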